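/- Let k ∈ (0,1). For every n ∈ ℕ, Kuznetsov's moment integrals satisfy the two recurrence relations I_{n+2}^+ = 2n(2n+3)(1−2k²) I_{n+1}^+ + Σ_{j=0}^{n} [2·C(2n+3, 2j+3) − C(2n+4, 2j+4)] I_{j+2}^+ I_{n−j}^+ and I_{n+2}^+ = −2(1−2k²) I_{n+1}^+ + 12 Σ_{j=0}^{n} C(2n+2, 2j) I_j^+ Σ_{l=0}^{n−j} C(2n−2j+1, 2l) I_l^+ I_{n−j−l}^+, where C(a,b) denotes the binomial coefficient. -/

import Mathlib

/-!
Write `K = K(k)`, `K' = K(k')`. After `x = y²`, the numbers `I_n^+` become, up to the sign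
`(-1)^n`, the odd Taylor derivatives at `0` of the odd function
`G(u) = ∫₀^∞ sin (u y) / (cos (X y) + cosh (Y y)) dy + ∫₀^∞ sinh (u y) / (cosh (X y) + cos (Y y)) dy`
with `X = K`, `Y = K'`, which is holomorphic on the rectangle `|Re u| < X`, `|Im u| < Y`
(`Gd`, `Gr_zero_odd`, `Iplus_eq_momSum`). Everything follows once `G` is known to solve
`G'' = 2 G³ + 2 (1 - 2 k²) G` with `G'(0) = 1`.

*The differential equation, for arbitrary `X, Y > 0`.* Expanding the weights in exponentials turns
`G''` into an alternating series over `ℤ × ℤ`; sorting by parity identifies it with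
`℘'(u - X) - ℘'(u - i Y)` for the lattice `2 X ℤ + 2 i Y ℤ` (`Gd_two_eq`). Integration gives
`G' = ℘(u - X) - ℘(u - i Y)`, the constant being fixed at `u = (X - i Y) / 2`, where both sides
vanish (`Gd_one_eq`). From `℘'² = 4 ℘³ - g₂ ℘ - g₃` and `℘'' = 6 ℘² - g₂ / 2`, the function
`℘'(u - X) + ℘'(u - i Y) - 2 G G'` divided by `G'` has zero derivative, and it vanishes at `0`
(`wp_sum_deriv`). Therefore `℘(u - X) + ℘(u - i Y) - G²` is constant, and
`G'' = 2 G³ + 2 A G`, `G'² = G⁴ + 2 A G² + m²` with `m = G'(0)` (`Gd_ode`, `Gd_first_integral`).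

*The constants.* On `[0, X)` the function `G` increases from `0` to `∞`, so separation of variables
gives `X = ∫₀^∞ dx / √(x⁴ + 2 A x² + m²)`. Exchanging `X` and `Y` replaces `A` by `-A`. On the other
hand `K = ∫₀^∞ dx / √(x⁴ + 2 a x² + 1)` with `a = 1 - 2 k²`, and `K'` is the same integral with `-a`
(`quarticInt_ellipticK`). As these integrals decrease strictly in the middle coefficient, `A = a`
and `m = 1` (`constants`).

*The recurrences.* The second one is the Leibniz rule at `0` for `G''' = 6 G' G² + 2 a G'`
(`second_recurrence`). The first one needs only `I_0 = 1` and `I_1 = -2 a`: its coefficients extend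
to an antisymmetric convolution, whose total sum is zero (`first_recurrence`).
-/

open MeasureTheory Real

/-- The complete elliptic integral of the first kind `K(k)`. -/
noncomputable def ellipticK (k : ℝ) : ℝ :=
  ∫ θ in (0 : ℝ)..(π / 2), (1 - k ^ 2 * Real.sin θ ^ 2) ^ (-(1 / 2) : ℝ)

/-- Kuznetsov's moment integral `I_n^+`, realizing
`(1/2)∫_ℝ x^n dx/(cos(√x K) + cosh(√x K'))` with `√x = i√(−x)` for `x < 0`. -/
noncomputable def Iplus (k : ℝ) (n : ℕ) : ℝ :=
  (1 / 2) * (∫ x in Set.Ioi (0 : ℝ), x ^ n /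
      (Real.cos (ellipticK k * Real.sqrt x) +
        Real.cosh (ellipticK (Real.sqrt (1 - k ^ 2)) * Real.sqrt x)))
  + ((-1 : ℝ) ^ n / 2) * (∫ x in Set.Ioi (0 : ℝ), x ^ n /
      (Real.cosh (ellipticK k * Real.sqrt x) +
        Real.cos (ellipticK (Real.sqrt (1 - k ^ 2)) * Real.sqrt x)))

/-- Kuznetsov's moment integral `I_n^−`, realizing
`∫_ℝ x^{n+1} dx/(cos(√x K) − cosh(√x K'))` with `√x = i√(−x)` for `x < 0`. -/
noncomputable def Iminus (k : ℝ) (n : ℕ) : ℝ :=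
  (∫ x in Set.Ioi (0 : ℝ), x ^ (n + 1) /
      (Real.cos (ellipticK k * Real.sqrt x) -
        Real.cosh (ellipticK (Real.sqrt (1 - k ^ 2)) * Real.sqrt x)))
  + (-1 : ℝ) ^ (n + 1) * (∫ x in Set.Ioi (0 : ℝ), x ^ (n + 1) /
      (Real.cosh (ellipticK k * Real.sqrt x) -
        Real.cos (ellipticK (Real.sqrt (1 - k ^ 2)) * Real.sqrt x)))

/-! ### The weights and their Laplace transforms -/

/-- The weight `1 / (cos (X y) + cosh (Y y))`. -/
noncomputable def wt (X Y y : ℝ) : ℝ := 1 / (Real.cos (X * y) + Real.cosh (Y * y))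

lemma wt_den_pos (X : ℝ) {Y : ℝ} (hY : 0 < Y) (y : ℝ) :
    0 < Real.cos (X * y) + Real.cosh (Y * y) := by
  rcases eq_or_ne y 0 with rfl | hy
  · simp
  · have h1 : 1 < Real.cosh (Y * y) := Real.one_lt_cosh.mpr (by positivity)
    have h2 := Real.neg_one_le_cos (X * y)
    linarith

lemma wt_pos (X : ℝ) {Y : ℝ} (hY : 0 < Y) (y : ℝ) : 0 < wt X Y y :=
  one_div_pos.mpr (wt_den_pos X hY y)

lemma wt_continuous (X : ℝ) {Y : ℝ} (hY : 0 < Y) : Continuous (wt X Y) := by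
  unfold wt
  exact continuous_const.div (by fun_prop) (fun y => (wt_den_pos X hY y).ne')

lemma wt_bound (X : ℝ) {Y : ℝ} (hY : 0 < Y) :
    ∃ C : ℝ, 0 < C ∧ ∀ y, 0 < y → wt X Y y ≤ C * Real.exp (-Y * y) := by
  -- beyond `3 / Y` the estimate `cosh (Y y) - 1 ≥ exp (Y y) / 4` suffices
  obtain ⟨B, hB⟩ := (isCompact_Icc (a := (0 : ℝ)) (b := 3 / Y)).bddAbove_image
    (((wt_continuous X hY).mul (by fun_prop : Continuous fun y => Real.exp (Y * y))).continuousOn)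
  refine ⟨max B 4, by positivity, fun y hy => ?_⟩
  have key : wt X Y y * Real.exp (Y * y) ≤ max B 4 := by
    rcases le_or_gt y (3 / Y) with h | h
    · exact le_trans (hB ⟨y, ⟨hy.le, h⟩, rfl⟩) (le_max_left _ _)
    · refine le_trans ?_ (le_max_right _ _)
      have h3 : 3 < Y * y := by rwa [div_lt_iff₀ hY, mul_comm] at h
      have h4 : 4 < Real.exp (Y * y) := by
        have := Real.add_one_le_exp (Y * y); linarith
      have h2 := Real.neg_one_le_cos (X * y)
      have h5 : Real.exp (Y * y) / 2 ≤ Real.cosh (Y * y) := by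
        rw [Real.cosh_eq]; have := Real.exp_pos (-(Y * y)); linarith
      unfold wt
      rw [one_div_mul_eq_div, div_le_iff₀ (wt_den_pos X hY y)]
      linarith
  have h1 : Real.exp (Y * y) * Real.exp (-Y * y) = 1 := by
    rw [← Real.exp_add]; simp
  calc wt X Y y = wt X Y y * Real.exp (Y * y) * Real.exp (-Y * y) := by rw [mul_assoc, h1, mul_one]
    _ ≤ _ := by gcongr

/-- The measure `wt X Y y dy` on the positive half-line. -/
noncomputable def wtMeasure (X Y : ℝ) : Measure ℝ :=
  (volume.restrict (Set.Ioi 0)).withDensity (fun y => ENNReal.ofReal (wt X Y y))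

/-- The Laplace-type integrals `∫₀^∞ y^n exp (z y) / (cos (X y) + cosh (Y y)) dy`. -/
noncomputable def lap (X Y : ℝ) (n : ℕ) (z : ℂ) : ℂ :=
  ∫ y in Set.Ioi (0 : ℝ), (wt X Y y : ℂ) * ((y : ℂ) ^ n * Complex.exp (z * y))

lemma wt_measurable (X : ℝ) {Y : ℝ} (hY : 0 < Y) :
    Measurable (fun y => ENNReal.ofReal (wt X Y y)) :=
  (wt_continuous X hY).measurable.ennreal_ofReal

lemma lap_eq (X : ℝ) {Y : ℝ} (hY : 0 < Y) (n : ℕ) (z : ℂ) :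
    lap X Y n z = ∫ y, ((y : ℂ) ^ n * Complex.exp (z * y)) ∂(wtMeasure X Y) := by
  rw [wtMeasure, integral_withDensity_eq_integral_toReal_smul (wt_measurable X hY) (by simp)]
  simp [lap, (wt_pos X hY _).le]

lemma integrableOn_exp_mul_wt (X : ℝ) {Y : ℝ} (hY : 0 < Y) {t : ℝ} (ht : t < Y) :
    IntegrableOn (fun y => wt X Y y * Real.exp (t * y)) (Set.Ioi 0) := by
  obtain ⟨C, hC, hb⟩ := wt_bound X hY
  have h1 : IntegrableOn (fun y : ℝ => C * Real.exp (-(Y - t) * y)) (Set.Ioi 0) :=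
    ((exp_neg_integrableOn_Ioi 0 (sub_pos.mpr ht))).const_mul C
  refine Integrable.mono' h1 ?_ ?_
  · exact (((wt_continuous X hY).mul (by fun_prop))).aestronglyMeasurable
  · refine (ae_restrict_mem measurableSet_Ioi).mono fun y hy => ?_
    rw [Real.norm_of_nonneg (mul_nonneg (wt_pos X hY y).le (Real.exp_pos _).le)]
    calc wt X Y y * Real.exp (t * y) ≤ C * Real.exp (-Y * y) * Real.exp (t * y) := by
          gcongr; exact hb y hy
      _ = _ := by rw [mul_assoc, ← Real.exp_add]; ring_nf

lemma mem_interior_expSet (X : ℝ) {Y : ℝ} (hY : 0 < Y) {t : ℝ} (ht : t < Y) :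
    t ∈ interior (ProbabilityTheory.integrableExpSet (fun y : ℝ => y) (wtMeasure X Y)) := by
  refine mem_interior.mpr ⟨Set.Iio Y, fun s hs => ?_, isOpen_Iio, ht⟩
  simp only [ProbabilityTheory.integrableExpSet, Set.mem_ofPred_eq]
  rw [wtMeasure, integrable_withDensity_iff_integrable_smul' (wt_measurable X hY) (by simp)]
  have := integrableOn_exp_mul_wt X hY hs
  simpa [IntegrableOn, (wt_pos X hY _).le] using this

lemma lap_hasDerivAt (X : ℝ) {Y : ℝ} (hY : 0 < Y) (n : ℕ) {z : ℂ} (hz : z.re < Y) :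
    HasDerivAt (lap X Y n) (lap X Y (n + 1) z) z := by
  have h := ProbabilityTheory.hasDerivAt_integral_pow_mul_exp (mem_interior_expSet X hY hz) n
  rw [lap_eq X hY, funext (lap_eq X hY n)]
  exact h

lemma integral_pow_mul_exp (n : ℕ) {z : ℂ} (hz : z.re < 0) :
    ∫ y in Set.Ioi (0 : ℝ), ((y : ℂ) ^ n * Complex.exp (z * y)) = n.factorial / (-z) ^ (n + 1) := by
  have hmem : ∀ t : ℝ, t < 0 → t ∈ interior (ProbabilityTheory.integrableExpSet (fun y : ℝ => y)
      (volume.restrict (Set.Ioi 0))) := fun t ht => by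
    refine mem_interior.mpr ⟨Set.Iio 0, fun s hs => ?_, isOpen_Iio, ht⟩
    simp only [ProbabilityTheory.integrableExpSet, Set.mem_ofPred_eq]
    simpa [IntegrableOn] using (exp_neg_integrableOn_Ioi 0 (neg_pos.mpr hs))
  induction n generalizing z with
  | zero =>
    have := integral_exp_mul_complex_Ioi hz 0
    simp only [pow_zero, one_mul, this]
    simp [neg_div, div_neg]
  | succ n ih =>
    have h := ProbabilityTheory.hasDerivAt_integral_pow_mul_exp (hmem _ hz) n
    have hz0 : z ≠ 0 := by rintro rfl; simp at hz
    have h2 : HasDerivAt (fun z : ℂ => (n.factorial : ℂ) / (-z) ^ (n + 1))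
        ((n + 1).factorial / (-z) ^ (n + 1 + 1)) z := by
      have h3 : HasDerivAt (fun z : ℂ => (-z) ^ (n + 1)) (((n + 1 : ℕ) : ℂ) * (-z) ^ n * (-1)) z := by
        simpa using ((hasDerivAt_id z).fun_neg).fun_pow (n + 1)
      have h4 := (hasDerivAt_const z (n.factorial : ℂ)).fun_div h3
        (pow_ne_zero _ (neg_ne_zero.mpr hz0))
      refine h4.congr_deriv ?_
      have hz1 : -z ≠ 0 := neg_ne_zero.mpr hz0
      rw [Nat.factorial_succ]
      push_cast
      generalize -z = w at hz1 ⊢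
      field_simp
      ring
    refine h.unique (h2.congr_of_eventuallyEq ?_)
    filter_upwards [(Complex.continuous_re.isOpen_preimage _ isOpen_Iio).mem_nhds hz] with x hx
    exact ih hx

lemma integrable_pow_mul_exp (n : ℕ) {z : ℂ} (hz : z.re < 0) :
    IntegrableOn (fun y : ℝ => ((y : ℂ) ^ n * Complex.exp (z * y))) (Set.Ioi 0) := by
  by_contra h
  have h1 := integral_pow_mul_exp n hz
  rw [integral_undef h] at h1
  have hz0 : z ≠ 0 := by rintro rfl; simp at hz
  have : (n.factorial : ℂ) / (-z) ^ (n + 1) ≠ 0 :=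
    div_ne_zero (by exact_mod_cast n.factorial_ne_zero) (pow_ne_zero _ (neg_ne_zero.mpr hz0))
  exact this h1.symm

lemma norm_pow_mul_exp (n : ℕ) (z : ℂ) {y : ℝ} (hy : 0 < y) :
    ‖((y : ℂ) ^ n * Complex.exp (z * y))‖ = y ^ n * Real.exp (z.re * y) := by
  rw [norm_mul, norm_pow, Complex.norm_real, Real.norm_of_nonneg hy.le, Complex.norm_exp]
  simp

lemma integral_norm_pow_mul_exp (n : ℕ) {z : ℂ} (hz : z.re < 0) :
    ∫ y in Set.Ioi (0 : ℝ), ‖((y : ℂ) ^ n * Complex.exp (z * y))‖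
      = n.factorial / (-z.re) ^ (n + 1) := by
  rw [setIntegral_congr_fun measurableSet_Ioi (fun y hy => norm_pow_mul_exp n z hy)]
  have h := integral_pow_mul_exp n (z := (z.re : ℂ)) (by simpa using hz)
  have h2 : ∀ y : ℝ, ((y : ℂ) ^ n * Complex.exp ((z.re : ℂ) * y)) =
      ((y ^ n * Real.exp (z.re * y) : ℝ) : ℂ) := fun y => by push_cast; rfl
  simp_rw [h2] at h
  rw [integral_complex_ofReal] at h
  exact_mod_cast h

/-! ### Expansion into a double series -/

lemma HasSum.congr_both {ι : Type*} {f g : ι → ℂ} {a b : ℂ} (h : HasSum f a)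
    (hf : ∀ i, g i = f i) (hb : b = a) : HasSum g b := by
  rw [hb, funext hf]; exact h

lemma wt_hasSum (X : ℝ) {Y : ℝ} (hY : 0 < Y) {y : ℝ} (hy : 0 < y) :
    HasSum (fun p : ℕ × ℕ => 2 * (-1 : ℂ) ^ (p.1 + p.2) *
      Complex.exp ((Complex.I * ((p.1 : ℂ) - p.2) * X - ((p.1 : ℂ) + p.2 + 1) * Y) * y))
      (wt X Y y : ℂ) := by
  set q : ℂ := -Complex.exp ((Complex.I * X - Y) * y) with hq
  set r : ℂ := -Complex.exp ((-Complex.I * X - Y) * y) with hr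
  have hlt : Real.exp (-(Y * y)) < 1 := by
    rw [Real.exp_lt_one_iff]; have := mul_pos hY hy; linarith
  have hqn : ‖q‖ < 1 := by
    rw [hq, norm_neg, Complex.norm_exp]; simpa using hlt
  have hrn : ‖r‖ < 1 := by
    rw [hr, norm_neg, Complex.norm_exp]; simpa using hlt
  have h1 := hasSum_geometric_of_norm_lt_one hqn
  have h2 := hasSum_geometric_of_norm_lt_one hrn
  have hs : Summable fun p : ℕ × ℕ => q ^ p.1 * r ^ p.2 :=
    summable_mul_of_summable_norm (summable_norm_geometric_of_norm_lt_one hqn)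
      (summable_norm_geometric_of_norm_lt_one hrn)
  have h3 := (h1.mul h2 hs).mul_left (2 * Complex.exp (-(Y * y)))
  refine h3.congr_both (fun p => ?_) ?_
  · rw [hq, hr, neg_pow (Complex.exp ((Complex.I * X - Y) * y)),
      neg_pow (Complex.exp ((-Complex.I * X - Y) * y)), ← Complex.exp_nat_mul,
      ← Complex.exp_nat_mul, pow_add]
    have : Complex.exp ((Complex.I * ((p.1 : ℂ) - p.2) * X - ((p.1 : ℂ) + p.2 + 1) * Y) * y) =
        Complex.exp (-(Y * y)) * Complex.exp (p.1 * ((Complex.I * X - Y) * y)) *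
          Complex.exp (p.2 * ((-Complex.I * X - Y) * y)) := by
      rw [← Complex.exp_add, ← Complex.exp_add]; congr 1; ring
    rw [this]; ring
  · have hD := (wt_den_pos X hY y).ne'
    have hDc : (Complex.cos (X * y) + Complex.cosh (Y * y)) ≠ 0 := by exact_mod_cast hD
    have e1 : (1 - q) * (1 - r) =
        2 * Complex.exp (-(Y * y)) * (Complex.cos (X * y) + Complex.cosh (Y * y)) := by
      have a1 : Complex.exp ((Complex.I * X - Y) * y) =
          Complex.exp (-(Y * y)) * Complex.exp (X * y * Complex.I) := by
        rw [← Complex.exp_add]; congr 1; ring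
      have a2 : Complex.exp ((-Complex.I * X - Y) * y) =
          Complex.exp (-(Y * y)) * Complex.exp (-(X * y) * Complex.I) := by
        rw [← Complex.exp_add]; congr 1; ring
      have a3 : Complex.exp (X * y * Complex.I) * Complex.exp (-(X * y) * Complex.I) = 1 := by
        rw [← Complex.exp_add]; simp
      have a4 : Complex.exp (-(Y * y)) * Complex.exp (Y * y) = 1 := by
        rw [← Complex.exp_add]; simp
      rw [hq, hr, a1, a2, Complex.cos, Complex.cosh]
      linear_combination Complex.exp (-(Y * y : ℂ)) ^ 2 * a3 - a4
    rw [← mul_inv, e1, wt]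
    push_cast
    have := Complex.exp_ne_zero (-(Y * y : ℂ))
    field_simp

lemma summable_inv_cube : Summable fun p : ℕ × ℕ => 1 / ((p.1 : ℝ) + p.2 + 1) ^ 3 := by
  have h1 : Summable fun j : ℕ => 1 / ((j : ℝ) + 1) ^ (3 / 2 : ℝ) := by
    have := (summable_nat_add_iff 1).mpr (Real.summable_one_div_nat_rpow (p := 3 / 2).mpr (by norm_num))
    simpa using this
  have h2 := h1.mul_of_nonneg h1 (fun j => by positivity) (fun j => by positivity)
  refine Summable.of_nonneg_of_le (fun p => by positivity) (fun p => ?_) h2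
  rw [one_div_mul_one_div]
  apply one_div_le_one_div_of_le (by positivity)
  rw [← Real.mul_rpow (by positivity) (by positivity)]
  have h3 : ((p.1 : ℝ) + p.2 + 1) ^ 3 = (((p.1 : ℝ) + p.2 + 1) ^ 2) ^ (3 / 2 : ℝ) := by
    rw [← Real.rpow_natCast, ← Real.rpow_natCast, ← Real.rpow_mul (by positivity)]
    norm_num
  rw [h3]
  apply Real.rpow_le_rpow (by positivity) _ (by norm_num)
  nlinarith [Nat.cast_nonneg (α := ℝ) p.1, Nat.cast_nonneg (α := ℝ) p.2,
    mul_nonneg (Nat.cast_nonneg (α := ℝ) p.1) (Nat.cast_nonneg (α := ℝ) p.2)]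

lemma lap_two_hasSum (X : ℝ) {Y : ℝ} (hY : 0 < Y) {z : ℂ} (hz : z.re < Y) :
    HasSum (fun p : ℕ × ℕ => (-1 : ℂ) ^ (p.1 + p.2) * 4 /
      (((p.1 : ℂ) + p.2 + 1) * Y - Complex.I * ((p.1 : ℂ) - p.2) * X - z) ^ 3)
      (lap X Y 2 z) := by
  set s : ℕ × ℕ → ℂ := fun p =>
    z + (Complex.I * ((p.1 : ℂ) - p.2) * X - ((p.1 : ℂ) + p.2 + 1) * Y) with hs
  have hsre : ∀ p, (s p).re = z.re - ((p.1 : ℝ) + p.2 + 1) * Y := fun p => by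
    simp [hs]; ring
  obtain ⟨c, hc, hcp⟩ : ∃ c : ℝ, 0 < c ∧ ∀ p : ℕ × ℕ, c * ((p.1 : ℝ) + p.2 + 1) ≤ -(s p).re := by
    refine ⟨min Y (Y - z.re), lt_min hY (by linarith), fun p => ?_⟩
    rw [hsre]
    have h0 : (0 : ℝ) ≤ (p.1 : ℝ) + p.2 := by positivity
    have m1 := min_le_left Y (Y - z.re)
    have m2 := min_le_right Y (Y - z.re)
    nlinarith
  have hneg : ∀ p, (s p).re < 0 := fun p => by
    have := hcp p
    have : 0 < c * ((p.1 : ℝ) + p.2 + 1) := by positivity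
    linarith [hcp p]
  have key := hasSum_integral_of_summable_integral_norm (μ := volume.restrict (Set.Ioi (0 : ℝ)))
    (F := fun (p : ℕ × ℕ) (y : ℝ) =>
      (2 * (-1 : ℂ) ^ (p.1 + p.2)) * ((y : ℂ) ^ 2 * Complex.exp (s p * y)))
    (fun p => (integrable_pow_mul_exp 2 (hneg p)).const_mul _) (by
      simp_rw [norm_mul (2 * _ : ℂ), integral_const_mul]
      refine Summable.of_nonneg_of_le (fun p => ?_) (fun p => ?_)
        (summable_inv_cube.mul_left (4 / c ^ 3))
      · positivity
      · rw [integral_norm_pow_mul_exp 2 (hneg p)]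
        have : (c * ((p.1 : ℝ) + p.2 + 1)) ^ 3 ≤ (-(s p).re) ^ 3 :=
          pow_le_pow_left₀ (by positivity) (hcp p) 3
        calc ‖(2 * (-1 : ℂ) ^ (p.1 + p.2))‖ * ((2 : ℕ).factorial / (-(s p).re) ^ (2 + 1))
            = 4 / (-(s p).re) ^ 3 := by simp; ring
          _ ≤ 4 / (c * ((p.1 : ℝ) + p.2 + 1)) ^ 3 := by gcongr
          _ = _ := by field_simp)
  refine key.congr_both (fun p => ?_) ?_
  · rw [integral_const_mul, integral_pow_mul_exp 2 (hneg p)]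
    simp only [hs, Nat.factorial]
    push_cast
    rw [show ((p.1 : ℂ) + p.2 + 1) * Y - Complex.I * ((p.1 : ℂ) - p.2) * X - z =
      -(z + (Complex.I * ((p.1 : ℂ) - p.2) * X - ((p.1 : ℂ) + p.2 + 1) * Y)) by ring]
    ring
  · refine setIntegral_congr_fun measurableSet_Ioi fun y hy => ?_
    have h := ((wt_hasSum X hY hy).mul_right ((y : ℂ) ^ 2 * Complex.exp (z * y))).tsum_eq
    rw [← h]
    refine tsum_congr fun p => ?_
    simp only [hs]
    rw [add_mul z, Complex.exp_add]
    ring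

/-! ### A vanishing weighted first moment -/

/-- The real constant `2 ∑ (-1)^j / (2 j + 1)^2`, twice Catalan's constant. -/
noncomputable def catC : ℂ := ∑' j : ℕ, 2 * (-1 : ℂ) ^ j / (2 * (j : ℂ) + 1) ^ 2

lemma integral_div_cosh {γ : ℂ} (hγ : 0 < γ.re) :
    ∫ y in Set.Ioi (0 : ℝ), (y : ℂ) / Complex.cosh (γ * y) = catC / γ ^ 2 := by
  set s : ℕ → ℂ := fun j => -((2 * (j : ℂ) + 1) * γ) with hs
  have hsre : ∀ j, (s j).re = -((2 * (j : ℝ) + 1) * γ.re) := fun j => by simp [hs]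
  have hneg : ∀ j, (s j).re < 0 := fun j => by
    rw [hsre]; have : 0 < (2 * (j : ℝ) + 1) * γ.re := by positivity
    linarith
  have hg0 : γ ≠ 0 := by rintro rfl; simp at hγ
  have key := hasSum_integral_of_summable_integral_norm (μ := volume.restrict (Set.Ioi (0 : ℝ)))
    (F := fun (j : ℕ) (y : ℝ) => (2 * (-1 : ℂ) ^ j) * ((y : ℂ) ^ 1 * Complex.exp (s j * y)))
    (fun j => (integrable_pow_mul_exp 1 (hneg j)).const_mul _) (by
      simp_rw [norm_mul (2 * _ : ℂ), integral_const_mul]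
      have h1 : Summable fun j : ℕ => 1 / ((j : ℝ) + 1) ^ 2 := by
        have := (summable_nat_add_iff 1).mpr (Real.summable_one_div_nat_pow (p := 2).mpr (by norm_num))
        simpa using this
      refine Summable.of_nonneg_of_le (fun p => ?_) (fun j => ?_) (h1.mul_left (2 / γ.re ^ 2))
      · positivity
      · rw [integral_norm_pow_mul_exp 1 (hneg j), hsre]
        calc ‖(2 * (-1 : ℂ) ^ j)‖ * ((1 : ℕ).factorial / (- -((2 * (j : ℝ) + 1) * γ.re)) ^ (1 + 1))
            = 2 / ((2 * (j : ℝ) + 1) * γ.re) ^ 2 := by simp; ring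
          _ ≤ 2 / (((j : ℝ) + 1) * γ.re) ^ 2 := by
            gcongr; linarith [Nat.cast_nonneg (α := ℝ) j]
          _ = _ := by field_simp)
  have e1 : ∀ j : ℕ, ∫ y in Set.Ioi (0 : ℝ), (2 * (-1 : ℂ) ^ j) * ((y : ℂ) ^ 1 * Complex.exp (s j * y))
      = (2 * (-1 : ℂ) ^ j / (2 * (j : ℂ) + 1) ^ 2) * (1 / γ ^ 2) := fun j => by
    rw [integral_const_mul, integral_pow_mul_exp 1 (hneg j)]
    have : (2 * (j : ℂ) + 1) ≠ 0 := by norm_cast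
    simp [hs]
    field_simp
  simp_rw [e1] at key
  have h2 := key.tsum_eq
  rw [tsum_mul_right] at h2
  rw [catC, div_eq_mul_one_div, h2]
  refine setIntegral_congr_fun measurableSet_Ioi fun y hy => ?_
  have hy : 0 < y := hy
  set q : ℂ := -Complex.exp (-(2 * γ * y)) with hq
  have hqn : ‖q‖ < 1 := by
    rw [hq, norm_neg, Complex.norm_exp, Real.exp_lt_one_iff]
    have := mul_pos hγ hy
    simp; linarith
  have h3 := ((hasSum_geometric_of_norm_lt_one hqn).mul_left
    (2 * y * Complex.exp (-(γ * y)))).tsum_eq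
  have h4 : ∀ j : ℕ, (2 * (-1 : ℂ) ^ j) * ((y : ℂ) ^ 1 * Complex.exp (s j * y)) =
      2 * y * Complex.exp (-(γ * y)) * q ^ j := fun j => by
    rw [hq, neg_pow (Complex.exp _), ← Complex.exp_nat_mul]
    have : Complex.exp (s j * y) = Complex.exp (-(γ * y)) * Complex.exp (j * -(2 * γ * y)) := by
      rw [← Complex.exp_add]; congr 1; simp only [hs]; ring
    rw [this]; ring
  simp only [h4, h3]
  have hE := Complex.exp_ne_zero (-(γ * y))
  have e2 : 1 - q = 2 * Complex.exp (-(γ * y)) * Complex.cosh (γ * y) := by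
    rw [hq, Complex.cosh]
    have a1 : Complex.exp (-(2 * γ * y)) = Complex.exp (-(γ * y)) * Complex.exp (-(γ * y)) := by
      rw [← Complex.exp_add]; congr 1; ring
    have a2 : Complex.exp (-(γ * y)) * Complex.exp (γ * y) = 1 := by
      rw [← Complex.exp_add]; simp
    rw [a1]; linear_combination -a2
  have hne : 1 - q ≠ 0 := by
    intro h; rw [sub_eq_zero] at h; rw [← h] at hqn; simp at hqn
  rw [e2] at hne ⊢
  have := right_ne_zero_of_mul hne
  field_simp

lemma lap_integrable (X : ℝ) {Y : ℝ} (hY : 0 < Y) (n : ℕ) {z : ℂ} (hz : z.re < Y) :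
    IntegrableOn (fun y : ℝ => (wt X Y y : ℂ) * ((y : ℂ) ^ n * Complex.exp (z * y)))
      (Set.Ioi 0) := by
  obtain ⟨C, hC, hb⟩ := wt_bound X hY
  have hz' : (z - Y).re < 0 := by simpa using hz
  refine Integrable.mono' ((integrable_pow_mul_exp n hz').norm.const_mul C) ?_ ?_
  · exact ((Complex.continuous_ofReal.comp (wt_continuous X hY)).mul (by fun_prop)).aestronglyMeasurable
  · refine (ae_restrict_mem measurableSet_Ioi).mono fun y hy => ?_
    have hy : 0 < y := hy
    rw [norm_mul, norm_pow_mul_exp n z hy, norm_pow_mul_exp n _ hy, Complex.norm_real,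
      Real.norm_of_nonneg (wt_pos X hY y).le]
    calc wt X Y y * (y ^ n * Real.exp (z.re * y))
        ≤ C * Real.exp (-Y * y) * (y ^ n * Real.exp (z.re * y)) := by gcongr; exact hb y hy
      _ = C * (y ^ n * Real.exp ((z - Y).re * y)) := by
        rw [show (z - Y).re * y = -Y * y + z.re * y by simp; ring, Real.exp_add]; ring

/-- Since `cos (X y) + cosh (Y y) = 2 cosh (v y) cosh (v' y)` for `v, v' = (Y ± i X) / 2`, the
symmetrised first moment at `v` collapses to the integral of `y / cosh (v' y)`. -/
lemma lap_one_symm (X : ℝ) {Y : ℝ} (hY : 0 < Y) {v vb : ℂ} (hsum : v + vb = Y)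
    (hre : v.re = Y / 2) (hdiff : v - vb = Complex.I * X ∨ v - vb = -(Complex.I * X)) :
    lap X Y 1 v + lap X Y 1 (-v) = catC / vb ^ 2 := by
  have hre' : vb.re = Y / 2 := by
    have := congrArg Complex.re hsum
    simp [hre] at this; linarith
  rw [← integral_div_cosh (by rw [hre']; positivity), lap, lap, ← integral_add
    (lap_integrable X hY 1 (by rw [hre]; linarith))
    (lap_integrable X hY 1 (by simp [hre]; linarith))]
  refine setIntegral_congr_fun measurableSet_Ioi fun y hy => ?_
  have hD := (wt_den_pos X hY y).ne'
  have hDc : (Complex.cos (X * y) + Complex.cosh (Y * y)) ≠ 0 := by exact_mod_cast hD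
  have e1 : Complex.cos (X * y) + Complex.cosh (Y * y) =
      2 * Complex.cosh (v * y) * Complex.cosh (vb * y) := by
    have h1 : Complex.cosh (v * y + vb * y) = Complex.cosh (Y * y) := by rw [← add_mul, hsum]
    have h2 : Complex.cosh (v * y - vb * y) = Complex.cos (X * y) := by
      rw [← sub_mul, ← Complex.cosh_mul_I]
      rcases hdiff with h | h
      · rw [h]; congr 1; ring
      · rw [h, ← Complex.cosh_neg]; congr 1; ring
    rw [← h1, ← h2, Complex.cosh_add, Complex.cosh_sub]; ring
  simp only [wt]
  push_cast
  rw [e1] at hDc ⊢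
  have h3 : Complex.cosh (vb * y) ≠ 0 := right_ne_zero_of_mul hDc
  have h4 : Complex.cosh (v * y) ≠ 0 := right_ne_zero_of_mul (left_ne_zero_of_mul hDc)
  have h5 : 2 * Complex.cosh (v * y) = Complex.exp (v * y) + Complex.exp (-v * y) := by
    rw [Complex.cosh, neg_mul]; ring
  rw [neg_mul] at h5 ⊢
  calc _ = (2 * Complex.cosh (v * y)) * y / (2 * Complex.cosh (v * y) * Complex.cosh (vb * y)) := by
        rw [h5]; ring
    _ = _ := by field_simp

/-! ### The generating function and the Weierstrass function -/

/-- The `n`-th derivative of the generating function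
`G(u) = ∫₀^∞ sin (u y) / (cos (X y) + cosh (Y y)) dy + ∫₀^∞ sinh (u y) / (cosh (X y) + cos (Y y)) dy`,
with both integrals written through exponentials. -/
noncomputable def Gd (X Y : ℝ) (n : ℕ) (u : ℂ) : ℂ :=
  (1 / 2) * (-Complex.I * Complex.I ^ n * lap X Y n (Complex.I * u) +
    Complex.I * (-Complex.I) ^ n * lap X Y n (-Complex.I * u)) +
  (1 / 2) * (lap Y X n u - (-1) ^ n * lap Y X n (-u))

/-- The open rectangle `|Re u| < X`, `|Im u| < Y` on which the generating function is defined. -/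
def rect (X Y : ℝ) : Set ℂ := {u | |u.re| < X ∧ |u.im| < Y}

lemma rect_eq (X Y : ℝ) : rect X Y = Set.Ioo (-X) X ×ℂ Set.Ioo (-Y) Y := by
  ext u
  simp [rect, Complex.mem_reProdIm, abs_lt]

lemma isOpen_rect (X Y : ℝ) : IsOpen (rect X Y) := by
  rw [rect_eq]; exact isOpen_Ioo.reProdIm isOpen_Ioo

lemma convex_rect (X Y : ℝ) : Convex ℝ (rect X Y) := by
  rw [rect_eq]
  exact ((convex_Ioo _ _).linear_preimage Complex.reLm).inter
    ((convex_Ioo _ _).linear_preimage Complex.imLm)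

lemma zero_mem_rect {X Y : ℝ} (hX : 0 < X) (hY : 0 < Y) : (0 : ℂ) ∈ rect X Y := by
  simp [rect, hX, hY]

lemma Gd_hasDerivAt {X Y : ℝ} (hX : 0 < X) (hY : 0 < Y) (n : ℕ) {u : ℂ} (hu : u ∈ rect X Y) :
    HasDerivAt (Gd X Y n) (Gd X Y (n + 1) u) u := by
  obtain ⟨h1, h2⟩ := hu
  rw [abs_lt] at h1 h2
  have a1 : HasDerivAt (fun u => lap X Y n (Complex.I * u))
      (lap X Y (n + 1) (Complex.I * u) * Complex.I) u :=
    HasDerivAt.comp u (lap_hasDerivAt X hY n (by simp; linarith))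
      (((hasDerivAt_id u).const_mul Complex.I).congr_deriv (mul_one _))
  have a2 : HasDerivAt (fun u => lap X Y n (-Complex.I * u))
      (lap X Y (n + 1) (-Complex.I * u) * (-Complex.I)) u :=
    HasDerivAt.comp u (lap_hasDerivAt X hY n (by simp; linarith))
      (((hasDerivAt_id u).const_mul (-Complex.I)).congr_deriv (mul_one _))
  have a3 : HasDerivAt (fun u => lap Y X n u) (lap Y X (n + 1) u) u :=
    lap_hasDerivAt Y hX n h1.2
  have a4 : HasDerivAt (fun u => lap Y X n (-u)) (lap Y X (n + 1) (-u) * (-1)) u :=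
    HasDerivAt.comp u (lap_hasDerivAt Y hX n (by simp; linarith)) (hasDerivAt_neg u)
  have h := ((((a1.const_mul (-Complex.I * Complex.I ^ n)).add
    (a2.const_mul (Complex.I * (-Complex.I) ^ n))).const_mul (1 / 2)).add
    ((a3.sub (a4.const_mul ((-1) ^ n))).const_mul (1 / 2)))
  refine h.congr_deriv ?_
  simp only [Gd]
  ring

/-- The period lattice `2 X ℤ + 2 i Y ℤ`. -/
noncomputable def rectLattice {X Y : ℝ} (hX : 0 < X) (hY : 0 < Y) : PeriodPair where
  ω₁ := 2 * X
  ω₂ := 2 * Y * Complex.I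
  indep := by
    rw [LinearIndependent.pair_iff]
    intro s t h
    have h1 := congrArg Complex.re h
    have h2 := congrArg Complex.im h
    simp at h1 h2
    exact ⟨h1.resolve_right hX.ne', h2.resolve_right hY.ne'⟩

/-- The sign `(-1)^m` of an integer, as a complex number. -/
def sgn (m : ℤ) : ℂ := if Even m then 1 else -1

lemma sgn_natCast (n : ℕ) : sgn n = (-1) ^ n := by
  rcases Nat.even_or_odd n with h | h
  · simp [sgn, h]
  · simp [sgn, h, Nat.not_even_iff_odd.mpr h]

lemma sgn_neg (m : ℤ) : sgn (-m) = sgn m := by simp [sgn]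

lemma sgn_add_one (m : ℤ) : sgn (m + 1) = -sgn m := by
  by_cases h : Even m <;> simp [sgn, h]

/-- The summand of the alternating lattice series representing `G''`. -/
noncomputable def latTerm (X Y : ℝ) (u : ℂ) (p : ℤ × ℤ) : ℂ :=
  2 * sgn (p.1 + p.2) / (u + (p.1 - p.2) * X + Complex.I * (p.1 + p.2 + 1) * Y) ^ 3

lemma HasSum.union_range {α γ : Type*} {f : γ → ℂ} {s : Set γ} {a b : ℂ}
    (hs : HasSum (f ∘ (↑) : s → ℂ) a) {g : α → γ} (hg : Function.Injective g)
    (hb : HasSum (fun x => f (g x)) b) (hd : ∀ x, g x ∉ s) :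
    HasSum (f ∘ (↑) : (s ∪ Set.range g : Set γ) → ℂ) (a + b) := by
  refine hs.add_disjoint ?_ (hg.hasSum_range_iff.mpr hb)
  rw [Set.disjoint_right]
  rintro _ ⟨x, rfl⟩
  exact hd x

lemma hasSum_on_range {α γ : Type*} (f : γ → ℂ) {g : α → γ} (hg : Function.Injective g) {a : ℂ}
    (h : HasSum (fun x => f (g x)) a) : HasSum (f ∘ (↑) : Set.range g → ℂ) a :=
  hg.hasSum_range_iff.mpr h

lemma HasSum.of_subtype_univ {γ : Type*} {f : γ → ℂ} {s : Set γ} {a : ℂ}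
    (hs : HasSum (f ∘ (↑) : s → ℂ) a) (h : s = Set.univ) : HasSum f a := by
  subst h
  exact (hasSum_subtype_iff_indicator.mp hs).congr_both (by simp) rfl

/-- The four quadrants of `ℤ × ℤ` come from the four Laplace transforms in `G''`. -/
lemma Gd_two_hasSum {X Y : ℝ} (hX : 0 < X) (hY : 0 < Y) {u : ℂ} (hu : u ∈ rect X Y) :
    HasSum (latTerm X Y u) (Gd X Y 2 u) := by
  obtain ⟨h1, h2⟩ := hu
  rw [abs_lt] at h1 h2
  have I3 : Complex.I ^ 3 = -Complex.I := by rw [pow_succ]; simp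
  have II : Complex.I * Complex.I = -1 := Complex.I_mul_I
  have hI := Complex.I_ne_zero
  have s1 := (lap_two_hasSum X hY (z := Complex.I * u) (by simp; linarith)).mul_left (Complex.I / 2)
  have s2 := (lap_two_hasSum X hY (z := -Complex.I * u) (by simp; linarith)).mul_left
    (-Complex.I / 2)
  have s3 := (lap_two_hasSum Y hX (z := u) (by linarith)).mul_left (1 / 2)
  have s4 := (lap_two_hasSum Y hX (z := -u) (by simp; linarith)).mul_left (-1 / 2)
  have t1 : HasSum (fun p : ℕ × ℕ => latTerm X Y u ((p.1 : ℤ), (p.2 : ℤ)))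
      (Complex.I / 2 * lap X Y 2 (Complex.I * u)) := by
    refine s1.congr_both (fun p => ?_) rfl
    simp only [latTerm]
    rw [← Nat.cast_add, sgn_natCast]
    push_cast
    rw [show ((p.1 : ℂ) + p.2 + 1) * Y - Complex.I * ((p.1 : ℂ) - p.2) * X - Complex.I * u =
      -Complex.I * (u + (p.1 - p.2) * X + Complex.I * (p.1 + p.2 + 1) * Y) by
        linear_combination ((p.1 : ℂ) + p.2 + 1) * Y * II]
    rw [mul_pow, neg_pow Complex.I, I3]
    field_simp
    norm_num
  have t2 : HasSum (fun p : ℕ × ℕ => latTerm X Y u (-1 - (p.1 : ℤ), -1 - (p.2 : ℤ)))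
      (-Complex.I / 2 * lap X Y 2 (-Complex.I * u)) := by
    refine s2.congr_both (fun p => ?_) rfl
    simp only [latTerm]
    rw [show -1 - (p.1 : ℤ) + (-1 - (p.2 : ℤ)) = -(((p.1 + p.2 : ℕ) : ℤ) + 1 + 1) by push_cast; ring,
      sgn_neg, sgn_add_one, sgn_add_one, sgn_natCast, neg_neg]
    push_cast
    rw [show ((p.1 : ℂ) + p.2 + 1) * Y - Complex.I * ((p.1 : ℂ) - p.2) * X - -Complex.I * u =
      Complex.I * (u + (-1 - p.1 - (-1 - p.2)) * X + Complex.I * (-1 - p.1 + (-1 - p.2) + 1) * Y) by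
        linear_combination ((p.1 : ℂ) + p.2 + 1) * Y * II]
    rw [mul_pow, I3]
    field_simp
    norm_num
  have t3 : HasSum (fun p : ℕ × ℕ => latTerm X Y u (-1 - (p.2 : ℤ), (p.1 : ℤ)))
      (1 / 2 * lap Y X 2 u) := by
    refine s3.congr_both (fun p => ?_) rfl
    simp only [latTerm]
    have e : sgn (-1 - (p.2 : ℤ) + p.1) = -(-1) ^ (p.1 + p.2) := by
      rw [← sgn_natCast, ← sgn_add_one]
      simp only [sgn]
      congr 1
      push_cast
      simp only [eq_iff_iff, Int.even_iff]
      omega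
    rw [e]
    push_cast
    rw [show ((p.1 : ℂ) + p.2 + 1) * X - Complex.I * ((p.1 : ℂ) - p.2) * Y - u =
      -(u + (-1 - p.2 - p.1) * X + Complex.I * (-1 - p.2 + p.1 + 1) * Y) by ring]
    rw [Odd.neg_pow (by decide : Odd 3)]
    generalize (u + (-1 - p.2 - p.1) * X + Complex.I * (-1 - p.2 + p.1 + 1) * Y) ^ 3 = w
    ring
  have t4 : HasSum (fun p : ℕ × ℕ => latTerm X Y u ((p.2 : ℤ), -1 - (p.1 : ℤ)))
      (-1 / 2 * lap Y X 2 (-u)) := by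
    refine s4.congr_both (fun p => ?_) rfl
    simp only [latTerm]
    have e : sgn ((p.2 : ℤ) + (-1 - p.1)) = -(-1) ^ (p.1 + p.2) := by
      rw [← sgn_natCast, ← sgn_add_one]
      simp only [sgn]
      congr 1
      push_cast
      simp only [eq_iff_iff, Int.even_iff]
      omega
    rw [e]
    push_cast
    rw [show ((p.1 : ℂ) + p.2 + 1) * X - Complex.I * ((p.1 : ℂ) - p.2) * Y - -u =
      (u + (p.2 - (-1 - p.1)) * X + Complex.I * (p.2 + (-1 - p.1) + 1) * Y) by ring]
    generalize (u + (p.2 - (-1 - p.1)) * X + Complex.I * (p.2 + (-1 - p.1) + 1) * Y) ^ 3 = w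
    ring
  have g1 : Function.Injective (fun p : ℕ × ℕ => ((p.1 : ℤ), (p.2 : ℤ))) := by
    rintro ⟨a, b⟩ ⟨c, d⟩ h; simp at h ⊢; omega
  have g2 : Function.Injective (fun p : ℕ × ℕ => (-1 - (p.1 : ℤ), -1 - (p.2 : ℤ))) := by
    rintro ⟨a, b⟩ ⟨c, d⟩ h; simp at h ⊢; omega
  have g3 : Function.Injective (fun p : ℕ × ℕ => (-1 - (p.2 : ℤ), (p.1 : ℤ))) := by
    rintro ⟨a, b⟩ ⟨c, d⟩ h; simp at h ⊢; omega
  have g4 : Function.Injective (fun p : ℕ × ℕ => ((p.2 : ℤ), -1 - (p.1 : ℤ))) := by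
    rintro ⟨a, b⟩ ⟨c, d⟩ h; simp at h ⊢; omega
  have S := (((hasSum_on_range (latTerm X Y u) g1 t1).union_range g2 t2 ?_).union_range g3 t3
    ?_).union_range g4 t4 ?_
  · refine (S.of_subtype_univ ?_).congr_both (fun _ => rfl) ?_
    · rw [Set.eq_univ_iff_forall]
      rintro ⟨a, b⟩
      rcases le_or_gt 0 a with ha | ha <;> rcases le_or_gt 0 b with hb | hb
      · exact Or.inl (Or.inl (Or.inl ⟨(a.toNat, b.toNat), by simp [ha, hb]⟩))
      · exact Or.inr ⟨((-1 - b).toNat, a.toNat), by simp; omega⟩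
      · exact Or.inl (Or.inr ⟨(b.toNat, (-1 - a).toNat), by simp; omega⟩)
      · exact Or.inl (Or.inl (Or.inr ⟨((-1 - a).toNat, (-1 - b).toNat), by simp; omega⟩))
    · simp only [Gd, neg_sq, Complex.I_sq]
      ring
  · rintro ⟨a, b⟩ ⟨⟨c, d⟩, h⟩; simp at h; omega
  · rintro ⟨a, b⟩ (⟨⟨c, d⟩, h⟩ | ⟨⟨c, d⟩, h⟩) <;> simp at h <;> omega
  · rintro ⟨a, b⟩ ((⟨⟨c, d⟩, h⟩ | ⟨⟨c, d⟩, h⟩) | ⟨⟨c, d⟩, h⟩) <;> simp at h <;> omega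

open PeriodPair in
/-- Splitting `ℤ × ℤ` by parity of the coordinate sum instead gives two translated lattices. -/
lemma wp_hasSum {X Y : ℝ} (hX : 0 < X) (hY : 0 < Y) (u : ℂ) :
    HasSum (latTerm X Y u) ((rectLattice hX hY).derivWeierstrassP (u - X) -
      (rectLattice hX hY).derivWeierstrassP (u - Complex.I * Y)) := by
  set L := rectLattice hX hY with hL
  have w : ∀ z, HasSum (fun p : ℤ × ℤ => -2 / (z - (p.1 * (2 * X) + p.2 * (2 * Y * Complex.I))) ^ 3)
      (L.derivWeierstrassP z) := fun z => by
    have h := (Equiv.hasSum_iff L.latticeEquivProd.symm.toEquiv).mpr (L.hasSum_derivWeierstrassP z)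
    refine h.congr_both (fun p => ?_) rfl
    have := L.latticeEquiv_symm_apply p
    simp only [Function.comp_apply, LinearEquiv.coe_toEquiv]
    rw [this]
    rfl
  have t1 : HasSum (fun p : ℤ × ℤ => latTerm X Y u (-p.2 - p.1 - 1, p.1 - p.2))
      (L.derivWeierstrassP (u - X)) := by
    refine (w (u - X)).congr_both (fun p => ?_) rfl
    have e : sgn (-p.2 - p.1 - 1 + (p.1 - p.2)) = -1 := by
      rw [sgn, if_neg (by rw [Int.even_iff]; omega)]
    simp only [latTerm, e]
    push_cast
    congr 1 <;> ring
  have t2 : HasSum (fun p : ℤ × ℤ => latTerm X Y u (-p.2 - p.1 - 1, p.1 - p.2 - 1))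
      (-L.derivWeierstrassP (u - Complex.I * Y)) := by
    refine (w (u - Complex.I * Y)).neg.congr_both (fun p => ?_) rfl
    have e : sgn (-p.2 - p.1 - 1 + (p.1 - p.2 - 1)) = 1 := by
      rw [sgn, if_pos (by rw [Int.even_iff]; omega)]
    simp only [latTerm, e]
    push_cast
    rw [← neg_div]
    congr 1 <;> ring
  have g1 : Function.Injective (fun p : ℤ × ℤ => (-p.2 - p.1 - 1, p.1 - p.2)) := by
    rintro ⟨a, b⟩ ⟨c, d⟩ h; simp at h ⊢; omega
  have g2 : Function.Injective (fun p : ℤ × ℤ => (-p.2 - p.1 - 1, p.1 - p.2 - 1)) := by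
    rintro ⟨a, b⟩ ⟨c, d⟩ h; simp at h ⊢; omega
  have S := (hasSum_on_range (latTerm X Y u) g1 t1).union_range g2 t2 ?_
  · refine (S.of_subtype_univ ?_).congr_both (fun _ => rfl) (by ring)
    rw [Set.eq_univ_iff_forall]
    rintro ⟨a, b⟩
    rcases Int.even_or_odd' (a + b) with ⟨c, h | h⟩
    · exact Or.inr ⟨(b - c, -c - 1), by simp; omega⟩
    · exact Or.inl ⟨(b - c - 1, -c - 1), by simp; omega⟩
  · rintro ⟨a, b⟩ ⟨⟨c, d⟩, h⟩; simp at h; omega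

lemma Gd_two_eq {X Y : ℝ} (hX : 0 < X) (hY : 0 < Y) {u : ℂ} (hu : u ∈ rect X Y) :
    Gd X Y 2 u = (rectLattice hX hY).derivWeierstrassP (u - X) -
      (rectLattice hX hY).derivWeierstrassP (u - Complex.I * Y) :=
  (Gd_two_hasSum hX hY hu).unique (wp_hasSum hX hY u)

/-! ### Second-order equation of `℘` and the first derivative of the generating function -/

section wp
open PeriodPair Topology Filter
variable (L : PeriodPair)

lemma wp_hasDerivAt {z : ℂ} (hz : z ∉ L.lattice) :
    HasDerivAt L.weierstrassP (L.derivWeierstrassP z) z := by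
  have := (L.analyticOnNhd_weierstrassP z hz).differentiableAt.hasDerivAt
  rwa [L.deriv_weierstrassP] at this

lemma isPreconnected_compl_lattice : IsPreconnected (L.latticeᶜ : Set ℂ) := by
  have hc : (L.lattice : Set ℂ).Countable := by
    have : Countable L.lattice := L.latticeEquivProd.toEquiv.countable_iff.mpr inferInstance
    exact Set.countable_coe_iff.mp this
  refine (hc.isConnected_compl_of_one_lt_rank ?_).isPreconnected
  rw [Complex.rank_real_complex]
  exact Nat.one_lt_ofNat

lemma wp_deriv_not_locally_zero {z : ℂ} (hz : z ∉ L.lattice)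
    (h : L.derivWeierstrassP =ᶠ[𝓝 z] 0) : False := by
  have h1 : Set.EqOn L.derivWeierstrassP 0 (L.latticeᶜ : Set ℂ) :=
    L.analyticOnNhd_derivWeierstrassP.eqOn_zero_of_preconnected_of_eventuallyEq_zero
      (isPreconnected_compl_lattice L) hz h
  have h2 : ∀ w ∈ (L.latticeᶜ : Set ℂ), L.weierstrassP w = L.weierstrassP z := fun w hw =>
    L.isClosed_lattice.isOpen_compl.is_const_of_deriv_eq_zero (isPreconnected_compl_lattice L)
      L.differentiableOn_weierstrassP (by rw [L.deriv_weierstrassP]; exact h1) hw hz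
  have h3 : L.weierstrassP =ᶠ[𝓝[≠] 0] fun _ => L.weierstrassP z := by
    have := nhdsWithin_le_nhds (s := {0}ᶜ) (L.compl_lattice_sdiff_singleton_mem_nhds 0)
    filter_upwards [this, self_mem_nhdsWithin] with w hw hw0
    exact h2 w (fun hl => hw ⟨hl, hw0⟩)
  have h4 := L.order_weierstrassP 0 (zero_mem _)
  rw [meromorphicOrderAt_congr h3, meromorphicOrderAt_const] at h4
  split_ifs at h4
  · exact absurd h4 (by decide)
  · exact absurd h4 (by decide)

/-- The second-order equation `℘'' = 6 ℘² - g₂ / 2`, obtained by differentiating the first-order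
equation and cancelling `℘'`. -/
lemma wp_deriv_hasDerivAt {z : ℂ} (hz : z ∉ L.lattice) :
    HasDerivAt L.derivWeierstrassP (6 * L.weierstrassP z ^ 2 - L.g₂ / 2) z := by
  have hopen : IsOpen (L.latticeᶜ : Set ℂ) := L.isClosed_lattice.isOpen_compl
  have hd : ∀ w ∈ (L.latticeᶜ : Set ℂ),
      HasDerivAt L.derivWeierstrassP (deriv L.derivWeierstrassP w) w := fun w hw =>
    (L.analyticOnNhd_derivWeierstrassP w hw).differentiableAt.hasDerivAt
  have hmul : ∀ w ∈ (L.latticeᶜ : Set ℂ), L.derivWeierstrassP w *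
      (deriv L.derivWeierstrassP w - (6 * L.weierstrassP w ^ 2 - L.g₂ / 2)) = 0 := fun w hw => by
    have a1 := (hd w hw).fun_pow 2
    have a2 := ((((wp_hasDerivAt L hw).fun_pow 3).const_mul 4).fun_sub
      ((wp_hasDerivAt L hw).const_mul L.g₂)).sub_const L.g₃
    have a3 := a2.congr_of_eventuallyEq (f₁ := fun w => L.derivWeierstrassP w ^ 2) (by
      filter_upwards [hopen.mem_nhds hw] with x hx using L.derivWeierstrassP_sq x hx)
    have := a1.unique a3
    push_cast at this
    linear_combination this / 2
  have hcont : ContinuousAt (fun w => deriv L.derivWeierstrassP w -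
      (6 * L.weierstrassP w ^ 2 - L.g₂ / 2)) z :=
    (L.analyticOnNhd_derivWeierstrassP z hz).deriv.continuousAt.sub
      ((((L.analyticOnNhd_weierstrassP z hz).continuousAt.pow 2).const_mul 6).sub_const _)
  have hE : deriv L.derivWeierstrassP z - (6 * L.weierstrassP z ^ 2 - L.g₂ / 2) = 0 := by
    by_contra hne
    refine wp_deriv_not_locally_zero L hz ?_
    filter_upwards [hopen.mem_nhds hz, hcont.eventually_ne hne] with w hw hw2
    exact (mul_eq_zero.mp (hmul w hw)).resolve_right hw2
  have := hd z hz
  rwa [sub_eq_zero.mp hE] at this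

end wp

lemma mem_rectLattice {X Y : ℝ} (hX : 0 < X) (hY : 0 < Y) {z : ℂ} :
    z ∈ (rectLattice hX hY).lattice ↔ ∃ m n : ℤ, m * (2 * X) + n * (2 * Y * Complex.I) = z :=
  PeriodPair.mem_lattice

lemma sub_X_notMem {X Y : ℝ} (hX : 0 < X) (hY : 0 < Y) {u : ℂ} (hu : u ∈ rect X Y) :
    u - X ∉ (rectLattice hX hY).lattice := by
  rw [mem_rectLattice]
  rintro ⟨m, n, h⟩
  have h1 := congrArg Complex.re h
  simp at h1
  have h2 := abs_lt.mp hu.1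
  have h3 : u.re = (2 * m + 1) * X := by linarith
  rw [h3] at h2
  have a1 : (-1 : ℝ) < 2 * m + 1 := by nlinarith
  have a2 : (2 * m + 1 : ℝ) < 1 := by nlinarith
  have b1 : (-1 : ℤ) < 2 * m + 1 := by exact_mod_cast a1
  have b2 : (2 * m + 1 : ℤ) < 1 := by exact_mod_cast a2
  omega

lemma sub_Y_notMem {X Y : ℝ} (hX : 0 < X) (hY : 0 < Y) {u : ℂ} (hu : u ∈ rect X Y) :
    u - Complex.I * Y ∉ (rectLattice hX hY).lattice := by
  rw [mem_rectLattice]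
  rintro ⟨m, n, h⟩
  have h1 := congrArg Complex.im h
  simp at h1
  have h2 := abs_lt.mp hu.2
  have h3 : u.im = (2 * n + 1) * Y := by linarith
  rw [h3] at h2
  have a1 : (-1 : ℝ) < 2 * n + 1 := by nlinarith
  have a2 : (2 * n + 1 : ℝ) < 1 := by nlinarith
  have b1 : (-1 : ℤ) < 2 * n + 1 := by exact_mod_cast a1
  have b2 : (2 * n + 1 : ℤ) < 1 := by exact_mod_cast a2
  omega

/-- The shifted function `℘(u - X)`. -/
noncomputable def wpX {X Y : ℝ} (hX : 0 < X) (hY : 0 < Y) (u : ℂ) : ℂ :=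
  (rectLattice hX hY).weierstrassP (u - X)

/-- The shifted function `℘(u - i Y)`. -/
noncomputable def wpY {X Y : ℝ} (hX : 0 < X) (hY : 0 < Y) (u : ℂ) : ℂ :=
  (rectLattice hX hY).weierstrassP (u - Complex.I * Y)

/-- The shifted derivative `℘'(u - X)`. -/
noncomputable def wpX' {X Y : ℝ} (hX : 0 < X) (hY : 0 < Y) (u : ℂ) : ℂ :=
  (rectLattice hX hY).derivWeierstrassP (u - X)

/-- The shifted derivative `℘'(u - i Y)`. -/
noncomputable def wpY' {X Y : ℝ} (hX : 0 < X) (hY : 0 < Y) (u : ℂ) : ℂ :=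
  (rectLattice hX hY).derivWeierstrassP (u - Complex.I * Y)

section shifted
variable {X Y : ℝ} (hX : 0 < X) (hY : 0 < Y) {u : ℂ}

lemma wpX_hasDerivAt (hu : u ∈ rect X Y) : HasDerivAt (wpX hX hY) (wpX' hX hY u) u := by
  have := (wp_hasDerivAt _ (sub_X_notMem hX hY hu))
  exact this.comp_sub_const u _

lemma wpY_hasDerivAt (hu : u ∈ rect X Y) : HasDerivAt (wpY hX hY) (wpY' hX hY u) u := by
  have := (wp_hasDerivAt _ (sub_Y_notMem hX hY hu))
  exact this.comp_sub_const u _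

lemma wpX'_hasDerivAt (hu : u ∈ rect X Y) :
    HasDerivAt (wpX' hX hY) (6 * wpX hX hY u ^ 2 - (rectLattice hX hY).g₂ / 2) u := by
  have := (wp_deriv_hasDerivAt _ (sub_X_notMem hX hY hu))
  exact this.comp_sub_const u _

lemma wpY'_hasDerivAt (hu : u ∈ rect X Y) :
    HasDerivAt (wpY' hX hY) (6 * wpY hX hY u ^ 2 - (rectLattice hX hY).g₂ / 2) u := by
  have := (wp_deriv_hasDerivAt _ (sub_Y_notMem hX hY hu))
  exact this.comp_sub_const u _

lemma wpX'_zero : wpX' hX hY 0 = 0 := by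
  set L := rectLattice hX hY with hL
  have h1 := L.derivWeierstrassP_sub_coe (X : ℂ) ⟨L.ω₁, L.ω₁_mem_lattice⟩
  have h2 := L.derivWeierstrassP_neg (X : ℂ)
  have h3 : (X : ℂ) - L.ω₁ = -X := by simp only [hL, rectLattice]; ring
  simp only [h3] at h1
  have h4 : wpX' hX hY 0 = L.derivWeierstrassP (-X) := by simp [wpX', hL]
  rw [h4]
  linear_combination (h1 + h2) / 2

lemma wpY'_zero : wpY' hX hY 0 = 0 := by
  set L := rectLattice hX hY with hL
  have h1 := L.derivWeierstrassP_sub_coe (Complex.I * Y : ℂ) ⟨L.ω₂, L.ω₂_mem_lattice⟩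
  have h2 := L.derivWeierstrassP_neg (Complex.I * Y : ℂ)
  have h3 : (Complex.I * Y : ℂ) - L.ω₂ = -(Complex.I * Y) := by simp only [hL, rectLattice]; ring
  simp only [h3] at h1
  have h4 : wpY' hX hY 0 = L.derivWeierstrassP (-(Complex.I * Y)) := by simp [wpY', hL]
  rw [h4]
  linear_combination (h1 + h2) / 2

/-- `G'` and `℘(u - X) - ℘(u - i Y)` have the same derivative, and both vanish at
`u = (X - i Y) / 2`. -/
lemma Gd_one_eq (hu : u ∈ rect X Y) : Gd X Y 1 u = wpX hX hY u - wpY hX hY u := by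
  set u₀ : ℂ := (X - Complex.I * Y) / 2 with hu₀
  have hmem : u₀ ∈ rect X Y := by
    have e1 : u₀.re = X / 2 := by simp [hu₀]
    have e2 : u₀.im = -(Y / 2) := by simp [hu₀]; ring
    simp only [rect, Set.mem_ofPred_eq, e1, e2, abs_neg]
    rw [abs_of_pos (by positivity), abs_of_pos (by positivity)]
    constructor <;> linarith
  have hder : ∀ w ∈ rect X Y,
      HasDerivAt (fun u => Gd X Y 1 u - (wpX hX hY u - wpY hX hY u)) 0 w := fun w hw => by
    refine ((Gd_hasDerivAt hX hY 1 hw).fun_sub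
      ((wpX_hasDerivAt hX hY hw).fun_sub (wpY_hasDerivAt hX hY hw))).congr_deriv ?_
    rw [Gd_two_eq hX hY hw]
    simp [wpX', wpY']
  have hc := (isOpen_rect X Y).is_const_of_deriv_eq_zero (convex_rect X Y).isPreconnected
    (fun w hw => (hder w hw).differentiableAt.differentiableWithinAt)
    (fun w hw => (hder w hw).deriv) hu hmem
  have hD : wpX hX hY u₀ - wpY hX hY u₀ = 0 := by
    set L := rectLattice hX hY with hL
    have h1 := L.weierstrassP_sub_coe ((X + Complex.I * Y) / 2) ⟨L.ω₂, L.ω₂_mem_lattice⟩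
    have h2 := L.weierstrassP_neg ((X + Complex.I * Y) / 2)
    have e1 : u₀ - X = -((X + Complex.I * Y) / 2) := by rw [hu₀]; ring
    have e2 : u₀ - Complex.I * Y = (X + Complex.I * Y) / 2 - L.ω₂ := by
      simp only [hu₀, hL, rectLattice]; ring
    simp only [wpX, wpY, ← hL]
    rw [e1, e2, h1, h2, sub_self]
  have hG : Gd X Y 1 u₀ = 0 := by
    have a1 := lap_one_symm X hY (v := Complex.I * u₀) (vb := (Y - Complex.I * X) / 2)
      (by rw [hu₀]; linear_combination -(Y : ℂ) / 2 * Complex.I_mul_I)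
      (by simp [hu₀, neg_div])
      (Or.inl (by rw [hu₀]; linear_combination -(Y : ℂ) / 2 * Complex.I_mul_I))
    have a2 := lap_one_symm Y hX (v := u₀) (vb := (X + Complex.I * Y) / 2)
      (by rw [hu₀]; ring) (by simp [hu₀]) (Or.inr (by rw [hu₀]; ring))
    have e : ((Y - Complex.I * X) / 2) ^ 2 = -((X + Complex.I * Y) / 2) ^ 2 := by
      linear_combination ((X : ℂ) ^ 2 + Y ^ 2) / 4 * Complex.I_mul_I
    rw [e] at a1
    simp only [Gd, pow_one]
    rw [div_neg] at a1
    have II := Complex.I_mul_I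
    rw [neg_mul Complex.I u₀]
    linear_combination (1 / 2) * a1 + (1 / 2) * a2 - (1 / 2) * (lap X Y 1 (Complex.I * u₀) +
      lap X Y 1 (-(Complex.I * u₀))) * II
  simp only [hG, hD, sub_zero] at hc
  exact sub_eq_zero.mp hc

end shifted

/-! ### Moments and the differential equation of the generating function -/

/-- The moments `∫₀^∞ y^n / (cos (X y) + cosh (Y y)) dy`. -/
noncomputable def mom (X Y : ℝ) (n : ℕ) : ℝ := ∫ y in Set.Ioi (0 : ℝ), wt X Y y * y ^ n

/-- The signed combination of odd moments which becomes `I_m^+` when `X = K` and `Y = K'`. -/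
noncomputable def momSum (X Y : ℝ) (m : ℕ) : ℝ :=
  mom X Y (2 * m + 1) + (-1) ^ m * mom Y X (2 * m + 1)

lemma lap_zero (X Y : ℝ) (n : ℕ) : lap X Y n 0 = mom X Y n := by
  rw [mom, ← integral_complex_ofReal]
  simp [lap]

lemma mom_pos (X : ℝ) {Y : ℝ} (hY : 0 < Y) (n : ℕ) : 0 < mom X Y n := by
  have hint : IntegrableOn (fun y => wt X Y y * y ^ n) (Set.Ioi 0) := by
    have h := (lap_integrable X hY n (z := 0) (by simpa using hY)).re
    simp only [zero_mul, Complex.exp_zero, mul_one] at h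
    refine h.congr (Filter.Eventually.of_forall fun y => ?_)
    simp only
    rw [← Complex.ofReal_pow, ← Complex.ofReal_mul]
    exact Complex.ofReal_re _
  rw [mom, setIntegral_pos_iff_support_of_nonneg_ae ?_ hint]
  · have : Function.support (fun y => wt X Y y * y ^ n) ∩ Set.Ioi 0 = Set.Ioi 0 := by
      refine Set.inter_eq_right.mpr fun y hy => ?_
      have hy : 0 < y := hy
      exact (mul_pos (wt_pos X hY y) (pow_pos hy n)).ne'
    rw [this]; simp
  · refine (ae_restrict_mem measurableSet_Ioi).mono fun y hy => ?_
    have hy : 0 < y := hy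
    exact (mul_pos (wt_pos X hY y) (pow_pos hy n)).le

lemma momSum_zero_pos {X Y : ℝ} (hX : 0 < X) (hY : 0 < Y) : 0 < momSum X Y 0 := by
  have h1 := mom_pos X hY 1
  have h2 := mom_pos Y hX 1
  simp [momSum]; positivity

lemma momSum_swap (X Y : ℝ) (m : ℕ) : momSum Y X m = (-1) ^ m * momSum X Y m := by
  have h : ((-1 : ℝ) ^ m) * (-1) ^ m = 1 := by rw [← mul_pow]; simp
  simp only [momSum]
  linear_combination (-mom Y X (2 * m + 1)) * h

lemma Gd_zero_even (X Y : ℝ) (m : ℕ) : Gd X Y (2 * m) 0 = 0 := by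
  simp only [Gd, mul_zero, neg_zero, lap_zero, pow_mul, neg_sq, Complex.I_sq]
  simp

lemma Gd_zero_odd (X Y : ℝ) (m : ℕ) :
    Gd X Y (2 * m + 1) 0 = ((-1) ^ m * momSum X Y m : ℝ) := by
  have h : ((-1 : ℂ) ^ m) * (-1) ^ m = 1 := by rw [← mul_pow]; simp
  simp only [Gd, mul_zero, neg_zero, lap_zero, pow_succ _ (2 * m), pow_mul, neg_sq, Complex.I_sq,
    momSum]
  push_cast
  simp only [one_pow]
  linear_combination (-(-1 : ℂ) ^ m * mom X Y (2 * m + 1)) * Complex.I_mul_I -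
    mom Y X (2 * m + 1) * h

section ode
open Topology Filter
variable {X Y : ℝ} (hX : 0 < X) (hY : 0 < Y)
include hX hY

lemma Gd_one_zero_ne : Gd X Y 1 0 ≠ 0 := by
  have := Gd_zero_odd X Y 0
  simp only [mul_zero, zero_add, pow_zero, one_mul] at this
  rw [this]
  exact_mod_cast (momSum_zero_pos hX hY).ne'

lemma Gd_differentiableOn (n : ℕ) : DifferentiableOn ℂ (Gd X Y n) (rect X Y) := fun _ hu =>
  (Gd_hasDerivAt hX hY n hu).differentiableAt.differentiableWithinAt

/-- `(℘(u - X) + ℘(u - i Y))' = 2 G G'`: the defect divided by `G'` has derivative zero near `0`,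
where `G'` does not vanish. -/
lemma wp_sum_deriv {u : ℂ} (hu : u ∈ rect X Y) :
    wpX' hX hY u + wpY' hX hY u = 2 * Gd X Y 0 u * Gd X Y 1 u := by
  set E : ℂ → ℂ := fun u => wpX' hX hY u + wpY' hX hY u - 2 * Gd X Y 0 u * Gd X Y 1 u with hE
  set g := (rectLattice hX hY).g₂ with hg
  have h0 := zero_mem_rect hX hY
  have hEd : ∀ w ∈ rect X Y, HasDerivAt E (6 * wpX hX hY w ^ 2 - g / 2 +
      (6 * wpY hX hY w ^ 2 - g / 2) -
      (2 * Gd X Y 1 w * Gd X Y 1 w + 2 * Gd X Y 0 w * Gd X Y 2 w)) w := fun w hw =>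
    ((wpX'_hasDerivAt hX hY hw).add (wpY'_hasDerivAt hX hY hw)).sub
      (((Gd_hasDerivAt hX hY 0 hw).const_mul 2).mul (Gd_hasDerivAt hX hY 1 hw))
  have hq : ∀ w ∈ rect X Y, Gd X Y 1 w ≠ 0 →
      HasDerivAt (fun w => E w / Gd X Y 1 w) 0 w := fun w hw hne => by
    refine ((hEd w hw).div (Gd_hasDerivAt hX hY 1 hw) hne).congr_deriv ?_
    rw [div_eq_zero_iff]
    left
    have p1 := (rectLattice hX hY).derivWeierstrassP_sq _ (sub_X_notMem hX hY hw)
    have p2 := (rectLattice hX hY).derivWeierstrassP_sq _ (sub_Y_notMem hX hY hw)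
    rw [← wpX', ← wpX] at p1
    rw [← wpY', ← wpY] at p2
    have d2 : Gd X Y (1 + 1) w = wpX' hX hY w - wpY' hX hY w := Gd_two_eq hX hY hw
    rw [hE]
    simp only
    rw [d2, Gd_one_eq hX hY hw]
    linear_combination -p1 + p2
  have hev : E =ᶠ[𝓝 0] 0 := by
    have hcont : ContinuousAt (Gd X Y 1) 0 := (Gd_hasDerivAt hX hY 1 h0).continuousAt
    obtain ⟨r, hr, hball⟩ := Metric.mem_nhds_iff.mp (inter_mem ((isOpen_rect X Y).mem_nhds h0)
      (hcont.eventually_ne (Gd_one_zero_ne hX hY)))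
    filter_upwards [Metric.ball_mem_nhds 0 hr] with w hw
    have hc := Metric.isOpen_ball.is_const_of_deriv_eq_zero (convex_ball (0 : ℂ) r).isPreconnected
      (f := fun w => E w / Gd X Y 1 w)
      (fun v hv => (hq v (hball hv).1 (hball hv).2).differentiableAt.differentiableWithinAt)
      (fun v hv => (hq v (hball hv).1 (hball hv).2).deriv) hw (Metric.mem_ball_self hr)
    have hE0 : E 0 = 0 := by
      have := Gd_zero_even X Y 0
      simp only [mul_zero] at this
      simp [hE, wpX'_zero, wpY'_zero, this]
    simp only [hE0, zero_div] at hc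
    exact (div_eq_zero_iff.mp hc).resolve_right (hball hw).2
  have han : AnalyticOnNhd ℂ E (rect X Y) := DifferentiableOn.analyticOnNhd
    (fun w hw => (hEd w hw).differentiableAt.differentiableWithinAt) (isOpen_rect X Y)
  have := han.eqOn_zero_of_preconnected_of_eventuallyEq_zero (convex_rect X Y).isPreconnected h0 hev hu
  exact sub_eq_zero.mp this

/-- The coefficient `A` of the differential equation `G'' = 2 G³ + 2 A G`. -/
noncomputable def odeA (X Y : ℝ) : ℝ := -momSum X Y 1 / (2 * momSum X Y 0)

lemma Gd_const_of_deriv {f : ℂ → ℂ} (hf : ∀ w ∈ rect X Y, HasDerivAt f 0 w) {u : ℂ}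
    (hu : u ∈ rect X Y) : f u = f 0 :=
  (isOpen_rect X Y).is_const_of_deriv_eq_zero (convex_rect X Y).isPreconnected
    (fun w hw => (hf w hw).differentiableAt.differentiableWithinAt)
    (fun w hw => (hf w hw).deriv) hu (zero_mem_rect hX hY)

lemma Gd_ode {u : ℂ} (hu : u ∈ rect X Y) :
    Gd X Y 2 u = 2 * Gd X Y 0 u ^ 3 + 2 * (odeA X Y : ℂ) * Gd X Y 0 u := by
  have h0 := zero_mem_rect hX hY
  have z0 : Gd X Y 0 0 = 0 := Gd_zero_even X Y 0
  have z1 : Gd X Y 1 0 = momSum X Y 0 := by simpa using Gd_zero_odd X Y 0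
  have z2 : Gd X Y 2 0 = 0 := Gd_zero_even X Y 1
  have z3 : Gd X Y 3 0 = -momSum X Y 1 := by simpa using Gd_zero_odd X Y 1
  set s : ℂ := wpX hX hY 0 + wpY hX hY 0 with hs
  have hS : ∀ w ∈ rect X Y, wpX hX hY w + wpY hX hY w = Gd X Y 0 w ^ 2 + s := fun w hw => by
    have := Gd_const_of_deriv hX hY (f := fun u => wpX hX hY u + wpY hX hY u - Gd X Y 0 u ^ 2)
      (fun v hv => by
        refine (((wpX_hasDerivAt hX hY hv).fun_add (wpY_hasDerivAt hX hY hv)).fun_sub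
          ((Gd_hasDerivAt hX hY 0 hv).fun_pow 2)).congr_deriv ?_
        rw [wp_sum_deriv hX hY hv]
        push_cast
        ring) hw
    simp only [z0] at this
    linear_combination this
  have h3 : ∀ w ∈ rect X Y, Gd X Y 3 w = 6 * Gd X Y 1 w * (Gd X Y 0 w ^ 2 + s) := fun w hw => by
    have a1 := (wpX'_hasDerivAt hX hY hw).sub (wpY'_hasDerivAt hX hY hw)
    have a2 := a1.congr_of_eventuallyEq (f₁ := Gd X Y 2) (by
      filter_upwards [(isOpen_rect X Y).mem_nhds hw] with v hv using Gd_two_eq hX hY hv)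
    rw [(Gd_hasDerivAt hX hY 2 hw).unique a2, ← hS w hw, Gd_one_eq hX hY hw]
    ring
  have hsA : (odeA X Y : ℂ) = 3 * s := by
    have := h3 0 h0
    rw [z3, z1, z0] at this
    have hne : (momSum X Y 0 : ℂ) ≠ 0 := by exact_mod_cast (momSum_zero_pos hX hY).ne'
    rw [odeA]
    push_cast
    rw [this]
    field_simp
    ring
  have := Gd_const_of_deriv hX hY
    (f := fun u => Gd X Y 2 u - (2 * Gd X Y 0 u ^ 3 + 2 * (odeA X Y : ℂ) * Gd X Y 0 u))
    (fun v hv => by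
      have d0 := Gd_hasDerivAt hX hY 0 hv
      refine ((Gd_hasDerivAt hX hY 2 hv).fun_sub (((d0.fun_pow 3).const_mul 2).fun_add
        (d0.const_mul _))).congr_deriv ?_
      rw [h3 v hv, hsA]
      push_cast
      ring) hu
  simp only [z0, z2] at this
  linear_combination this

lemma Gd_first_integral {u : ℂ} (hu : u ∈ rect X Y) :
    Gd X Y 1 u ^ 2 = Gd X Y 0 u ^ 4 + 2 * (odeA X Y : ℂ) * Gd X Y 0 u ^ 2 +
      (momSum X Y 0 : ℂ) ^ 2 := by
  have z0 : Gd X Y 0 0 = 0 := Gd_zero_even X Y 0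
  have z1 : Gd X Y 1 0 = momSum X Y 0 := by simpa using Gd_zero_odd X Y 0
  have := Gd_const_of_deriv hX hY
    (f := fun u => Gd X Y 1 u ^ 2 - (Gd X Y 0 u ^ 4 + 2 * (odeA X Y : ℂ) * Gd X Y 0 u ^ 2))
    (fun v hv => by
      have d0 := Gd_hasDerivAt hX hY 0 hv
      refine (((Gd_hasDerivAt hX hY 1 hv).fun_pow 2).fun_sub ((d0.fun_pow 4).fun_add
        ((d0.fun_pow 2).const_mul _))).congr_deriv ?_
      have := Gd_ode hX hY hv
      simp only [Nat.reduceAdd, zero_add]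
      rw [this]
      push_cast
      ring) hu
  simp only [z0, z1] at this
  linear_combination this

end ode

/-! ### The generating function on the real interval -/

/-- The `n`-th derivative of the generating function at a real point. -/
noncomputable def Gr (X Y : ℝ) (n : ℕ) (x : ℝ) : ℝ := (Gd X Y n x).re

lemma conj_lap (X Y : ℝ) (n : ℕ) (z : ℂ) :
    (starRingEnd ℂ) (lap X Y n z) = lap X Y n ((starRingEnd ℂ) z) := by
  rw [lap, ← integral_conj, lap]
  congr 1
  ext y
  simp [← Complex.exp_conj]

lemma Gd_ofReal (X Y : ℝ) (n : ℕ) (x : ℝ) : Gd X Y n x = Gr X Y n x := by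
  rw [Gr, eq_comm, ← Complex.conj_eq_iff_re]
  simp only [Gd, map_add, map_sub, map_mul, map_pow, map_neg, conj_lap, Complex.conj_I,
    Complex.conj_ofReal, map_div₀, map_one, map_ofNat, neg_neg]
  ring

lemma ofReal_mem_rect {X Y : ℝ} (hY : 0 < Y) {x : ℝ} (hx : |x| < X) : (x : ℂ) ∈ rect X Y := by
  simp [rect, hx, hY]

section real
variable {X Y : ℝ} (hX : 0 < X) (hY : 0 < Y) {x : ℝ}
include hX hY

lemma Gr_hasDerivAt (n : ℕ) (hx : |x| < X) :
    HasDerivAt (Gr X Y n) (Gr X Y (n + 1) x) x :=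
  (Gd_hasDerivAt hX hY n (ofReal_mem_rect hY hx)).real_of_complex

lemma Gr_ode (hx : |x| < X) :
    Gr X Y 2 x = 2 * Gr X Y 0 x ^ 3 + 2 * odeA X Y * Gr X Y 0 x := by
  have := Gd_ode hX hY (ofReal_mem_rect hY hx)
  simp only [Gd_ofReal] at this
  exact_mod_cast this

lemma Gr_first_integral (hx : |x| < X) :
    Gr X Y 1 x ^ 2 = Gr X Y 0 x ^ 4 + 2 * odeA X Y * Gr X Y 0 x ^ 2 + momSum X Y 0 ^ 2 := by
  have := Gd_first_integral hX hY (ofReal_mem_rect hY hx)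
  simp only [Gd_ofReal] at this
  exact_mod_cast this

end real

lemma Gr_zero_even (X Y : ℝ) (m : ℕ) : Gr X Y (2 * m) 0 = 0 := by
  simp [Gr, Gd_zero_even]

lemma Gr_zero_odd (X Y : ℝ) (m : ℕ) : Gr X Y (2 * m + 1) 0 = (-1) ^ m * momSum X Y m := by
  rw [Gr, Complex.ofReal_zero, Gd_zero_odd, Complex.ofReal_re]

/-! ### Inverting the generating function -/

section invert
open Topology Filter Set

lemma surj_of_tendsto {b : ℝ} (hb : 0 < b) {h : ℝ → ℝ} (hc : ContinuousOn h (Ico 0 b))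
    (h0 : h 0 = 0) (htop : Tendsto h (𝓝[<] b) atTop) {y : ℝ} (hy : 0 ≤ y) :
    ∃ x ∈ Ico 0 b, h x = y := by
  obtain ⟨t, ht1, ht2⟩ := ((htop.eventually_ge_atTop y).and
    (Ico_mem_nhdsLT hb)).exists
  have := hc.surjOn_Icc (left_mem_Ico.mpr hb) ht2
  obtain ⟨x, hx, hxy⟩ := this ⟨by rw [h0]; exact hy, ht1⟩
  exact ⟨x, hx, hxy⟩

/-- Change of variables along an increasing bijection `(0, b) → (0, ∞)`. -/
lemma integral_Ioi_of_increasing {b : ℝ} (hb : 0 < b) {h h' : ℝ → ℝ}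
    (hd : ∀ x ∈ Ico 0 b, HasDerivAt h (h' x) x) (hpos : ∀ x ∈ Ioo 0 b, 0 < h' x)
    (h0 : h 0 = 0) (htop : Tendsto h (𝓝[<] b) atTop) (F : ℝ → ℝ) :
    ∫ x in Ioi 0, F x = ∫ x in Ioo 0 b, h' x * F (h x) := by
  have hc : ContinuousOn h (Ico 0 b) := fun x hx => (hd x hx).continuousAt.continuousWithinAt
  have hm : StrictMonoOn h (Ico 0 b) := by
    refine strictMonoOn_of_deriv_pos (convex_Ico 0 b) hc fun x hx => ?_
    rw [interior_Ico] at hx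
    rw [(hd x (Ioo_subset_Ico_self hx)).deriv]
    exact hpos x hx
  have himg : h '' Ioo 0 b = Ioi 0 := by
    ext y
    constructor
    · rintro ⟨x, hx, rfl⟩
      have := hm (left_mem_Ico.mpr hb) (Ioo_subset_Ico_self hx) hx.1
      rwa [h0] at this
    · intro hy
      have hy : 0 < y := hy
      obtain ⟨x, hx, rfl⟩ := surj_of_tendsto hb hc h0 htop hy.le
      refine ⟨x, ⟨lt_of_le_of_ne hx.1 ?_, hx.2⟩, rfl⟩
      rintro rfl
      exact hy.ne' h0
  rw [← himg, integral_image_eq_integral_abs_deriv_smul measurableSet_Ioo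
    (fun x hx => (hd x (Ioo_subset_Ico_self hx)).hasDerivWithinAt)
    (hm.injOn.mono Ioo_subset_Ico_self)]
  refine setIntegral_congr_fun measurableSet_Ioo fun x hx => ?_
  simp only [smul_eq_mul, abs_of_pos (hpos x hx)]

/-- A solution of `g'² = g⁴ + 2 A g² + m²` blowing up at `X` never has `g' = 0`: a zero of `g'` would
force the quartic to be a perfect square, and then `g² - g(t)²` would vanish identically. -/
lemma deriv_pos_of_blowup {X A m : ℝ} (hX : 0 < X) (hm : 0 < m) {g g' : ℝ → ℝ}
    (hd : ∀ x ∈ Ico 0 X, HasDerivAt g (g' x) x) (hc' : ContinuousOn g' (Ico 0 X))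
    (hode : ∀ x ∈ Ico 0 X, g' x ^ 2 = g x ^ 4 + 2 * A * g x ^ 2 + m ^ 2)
    (h0 : g 0 = 0) (h0' : g' 0 = m) (htop : Tendsto g (𝓝[<] X) atTop) :
    ∀ x ∈ Ico 0 X, 0 < g' x := by
  have hc : ContinuousOn g (Ico 0 X) := fun x hx => (hd x hx).continuousAt.continuousWithinAt
  have hQ : ∀ y : ℝ, 0 ≤ y → 0 ≤ y ^ 2 + 2 * A * y + m ^ 2 := fun y hy => by
    obtain ⟨x, hx, hxy⟩ := surj_of_tendsto hX hc h0 htop (Real.sqrt_nonneg y)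
    have h1 := hode x hx
    have h2 : g x ^ 2 = y := by rw [hxy, Real.sq_sqrt hy]
    rw [show g x ^ 4 = (g x ^ 2) ^ 2 by ring, h2] at h1
    rw [← h1]; positivity
  have hne : ∀ t ∈ Ico 0 X, g' t ≠ 0 := fun t ht hzero => by
    set y₀ := g t ^ 2 with hy₀
    have e1 : y₀ ^ 2 + 2 * A * y₀ + m ^ 2 = 0 := by
      have := hode t ht
      rw [hzero] at this
      rw [hy₀]; linarith
    have hy0 : 0 < y₀ := by
      refine lt_of_le_of_ne (sq_nonneg _) fun h => ?_
      rw [← h] at e1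
      nlinarith
    -- the value of the quadratic at its formal minimum `-A` is `m² - A²`
    have hA : A < 0 := by nlinarith
    have e2 := hQ (-A) (by linarith)
    have e3 : (y₀ + A) ^ 2 = A ^ 2 - m ^ 2 := by linarith
    have e4 : (y₀ + A) ^ 2 = 0 := le_antisymm (by nlinarith) (sq_nonneg _)
    have e5 : A = -y₀ := by have := pow_eq_zero_iff (two_ne_zero) |>.mp e4; linarith
    have e6 : m ^ 2 = y₀ ^ 2 := by rw [e5] at e1; linarith
    have hsub : Icc 0 t ⊆ Ico 0 X := fun s hs => ⟨hs.1, lt_of_le_of_lt hs.2 ht.2⟩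
    obtain ⟨B, hB⟩ := isCompact_Icc.exists_bound_of_continuousOn (hc.mono hsub)
    have hmem : ∀ s ∈ Icc 0 t, t - s ∈ Icc 0 t := fun s hs => ⟨by linarith [hs.2], by linarith [hs.1]⟩
    have hder : ∀ s ∈ Icc 0 t, HasDerivAt (fun s => g (t - s) ^ 2 - y₀)
        (2 * g (t - s) * -g' (t - s)) s := fun s hs => by
      have a1 : HasDerivAt (fun s => g (t - s)) (-g' (t - s)) s :=
        (hd _ (hsub (hmem s hs))).comp_const_sub t s
      refine ((a1.fun_pow 2).sub_const y₀).congr_deriv ?_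
      push_cast; ring
    have hz := eq_zero_of_abs_deriv_le_mul_abs_self_of_eq_zero_right (K := 2 * B)
      (fun s hs => (hder s hs).continuousAt.continuousWithinAt)
      (fun s hs => (hder s (Ico_subset_Icc_self hs)).hasDerivWithinAt)
      (by simp [hy₀])
      (fun s hs => by
        have hs' := hmem s (Ico_subset_Icc_self hs)
        have b1 := hB _ hs'
        have b2 : |g' (t - s)| = |g (t - s) ^ 2 - y₀| := by
          rw [← sq_eq_sq_iff_abs_eq_abs, hode _ (hsub hs'), e5, e6]; ring
        rw [norm_mul, norm_mul, norm_neg]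
        simp only [Real.norm_eq_abs] at b1 ⊢
        rw [b2, abs_two]
        gcongr) t ⟨ht.1, le_rfl⟩
    simp only [sub_self, h0] at hz
    norm_num at hz
    exact hy0.ne' hz
  intro x hx
  by_contra hneg
  obtain ⟨t, ht, hzero⟩ := isPreconnected_Ico.intermediate_value hx (left_mem_Ico.mpr hX) hc'
    ⟨not_lt.mp hneg, by rw [h0']; exact hm.le⟩
  exact hne t ht hzero

/-- The elliptic integral `∫₀^∞ dx / √(x⁴ + 2 A x² + c)`. -/
noncomputable def quarticInt (A c : ℝ) : ℝ := ∫ x in Ioi (0 : ℝ), 1 / √(x ^ 4 + 2 * A * x ^ 2 + c)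

lemma quarticInt_of_blowup {X A m : ℝ} (hX : 0 < X) (hm : 0 < m) {g g' : ℝ → ℝ}
    (hd : ∀ x ∈ Ico 0 X, HasDerivAt g (g' x) x) (hc' : ContinuousOn g' (Ico 0 X))
    (hode : ∀ x ∈ Ico 0 X, g' x ^ 2 = g x ^ 4 + 2 * A * g x ^ 2 + m ^ 2)
    (h0 : g 0 = 0) (h0' : g' 0 = m) (htop : Tendsto g (𝓝[<] X) atTop) :
    quarticInt A (m ^ 2) = X ∧ ∀ y : ℝ, 0 ≤ y → 0 < y ^ 4 + 2 * A * y ^ 2 + m ^ 2 := by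
  have hpos := deriv_pos_of_blowup hX hm hd hc' hode h0 h0' htop
  constructor
  · rw [quarticInt, integral_Ioi_of_increasing hX hd
      (fun x hx => hpos x (Ioo_subset_Ico_self hx)) h0 htop]
    have : ∀ x ∈ Ioo 0 X, g' x * (1 / √(g x ^ 4 + 2 * A * g x ^ 2 + m ^ 2)) = 1 := fun x hx => by
      have hx' := Ioo_subset_Ico_self hx
      rw [← hode x hx', Real.sqrt_sq (hpos x hx').le]
      exact mul_one_div_cancel (hpos x hx').ne'
    rw [setIntegral_congr_fun measurableSet_Ioo this]
    simp [hX.le]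
  · intro y hy
    obtain ⟨x, hx, rfl⟩ := surj_of_tendsto hX
      (fun x hx => (hd x hx).continuousAt.continuousWithinAt) h0 htop hy
    rw [← hode x hx]
    have := hpos x hx
    positivity

lemma quarticInt_scale {A m : ℝ} (hm : 0 < m) :
    quarticInt (A / m) 1 = √m * quarticInt A (m ^ 2) := by
  have hs := Real.sqrt_pos.mpr hm
  have h := integral_comp_mul_left_Ioi (fun x => 1 / √(x ^ 4 + 2 * A * x ^ 2 + m ^ 2)) 0 hs
  rw [mul_zero] at h
  have e : ∀ x : ℝ, 1 / √((√m * x) ^ 4 + 2 * A * (√m * x) ^ 2 + m ^ 2) =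
      m⁻¹ * (1 / √(x ^ 4 + 2 * (A / m) * x ^ 2 + 1)) := fun x => by
    have h2 : √m ^ 2 = m := Real.sq_sqrt hm.le
    have : (√m * x) ^ 4 + 2 * A * (√m * x) ^ 2 + m ^ 2 =
        m ^ 2 * (x ^ 4 + 2 * (A / m) * x ^ 2 + 1) := by
      rw [show (√m * x) ^ 4 = (√m ^ 2) ^ 2 * x ^ 4 by ring, mul_pow, h2]
      field_simp
    rw [this, Real.sqrt_mul (by positivity), Real.sqrt_sq hm.le]
    rw [one_div, mul_inv, one_div]
  simp only [e, integral_const_mul, smul_eq_mul] at h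
  rw [← quarticInt, ← quarticInt] at h
  have h2 : √m * √m = m := Real.mul_self_sqrt hm.le
  have h3 : quarticInt (A / m) 1 = m * ((√m)⁻¹ * quarticInt A (m ^ 2)) := by
    rw [← h]; field_simp
  rw [h3]
  nth_rewrite 1 [← h2]
  field_simp

lemma quarticInt_strictAnti {A B : ℝ} (hAB : A < B)
    (hP : ∀ y : ℝ, 0 < y → 0 < y ^ 4 + 2 * A * y ^ 2 + 1)
    (hA : quarticInt A 1 ≠ 0) (hB : quarticInt B 1 ≠ 0) : quarticInt B 1 < quarticInt A 1 := by
  have iA : IntegrableOn (fun x : ℝ => 1 / √(x ^ 4 + 2 * A * x ^ 2 + 1)) (Ioi 0) := by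
    by_contra h; exact hA (integral_undef h)
  have iB : IntegrableOn (fun x : ℝ => 1 / √(x ^ 4 + 2 * B * x ^ 2 + 1)) (Ioi 0) := by
    by_contra h; exact hB (integral_undef h)
  rw [← sub_pos, quarticInt, quarticInt, ← integral_sub iA iB]
  have hpos : ∀ y ∈ Ioi (0 : ℝ), 0 < 1 / √(y ^ 4 + 2 * A * y ^ 2 + 1) -
      1 / √(y ^ 4 + 2 * B * y ^ 2 + 1) := fun y hy => by
    have hy : 0 < y := hy
    have h1 := hP y hy
    have h2 : y ^ 4 + 2 * A * y ^ 2 + 1 < y ^ 4 + 2 * B * y ^ 2 + 1 := by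
      have : 0 < y ^ 2 := by positivity
      nlinarith
    rw [sub_pos]
    exact one_div_lt_one_div_of_lt (Real.sqrt_pos.mpr h1) (Real.sqrt_lt_sqrt h1.le h2)
  rw [setIntegral_pos_iff_support_of_nonneg_ae
    ((ae_restrict_mem measurableSet_Ioi).mono fun y hy => (hpos y hy).le) (iA.sub iB)]
  have hsupp : (Function.support fun y : ℝ => 1 / √(y ^ 4 + 2 * A * y ^ 2 + 1) -
      1 / √(y ^ 4 + 2 * B * y ^ 2 + 1)) ∩ Ioi 0 = Ioi 0 :=
    Set.inter_eq_right.mpr fun y hy => (hpos y hy).ne'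
  rw [hsupp]
  simp

end invert

/-! ### The complete elliptic integral as a quartic integral -/

section elliptic
open Topology Filter Set

lemma one_sub_pos {k : ℝ} (hk : k ∈ Ioo (0 : ℝ) 1) (θ : ℝ) : 0 < 1 - k ^ 2 * Real.sin θ ^ 2 := by
  have h1 := Real.sin_sq_le_one θ
  have h2 : k ^ 2 < 1 := by nlinarith [hk.1, hk.2]
  nlinarith [sq_nonneg k]

lemma ellipticK_eq_Ioo {k : ℝ} (hk : k ∈ Ioo (0 : ℝ) 1) :
    ellipticK k = ∫ θ in Ioo (0 : ℝ) (π / 2), 1 / √(1 - k ^ 2 * Real.sin θ ^ 2) := by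
  rw [ellipticK, intervalIntegral.integral_of_le (by positivity), integral_Ioc_eq_integral_Ioo]
  refine setIntegral_congr_fun measurableSet_Ioo fun θ _ => ?_
  rw [Real.rpow_neg (one_sub_pos hk θ).le, ← Real.sqrt_eq_rpow, one_div]

lemma ellipticK_pos {k : ℝ} (hk : k ∈ Ioo (0 : ℝ) 1) : 0 < ellipticK k := by
  refine intervalIntegral.intervalIntegral_pos_of_pos ?_ (fun θ => ?_) (by positivity)
  · refine Continuous.intervalIntegrable ?_ _ _
    exact Continuous.rpow_const (by fun_prop) fun θ => Or.inl (one_sub_pos hk θ).ne'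
  · exact Real.rpow_pos_of_pos (one_sub_pos hk θ) _

/-- The substitution `x = tan θ √(1 - k² sin² θ)` transforms the quartic integral into `K(k)`. -/
lemma quarticInt_ellipticK {k : ℝ} (hk : k ∈ Ioo (0 : ℝ) 1) :
    quarticInt (1 - 2 * k ^ 2) 1 = ellipticK k := by
  have hk2 : k ^ 2 < 1 := by nlinarith [hk.1, hk.2]
  have hpi : (0 : ℝ) < π / 2 := by positivity
  set D : ℝ → ℝ := fun θ => √(1 - k ^ 2 * Real.sin θ ^ 2) with hD
  have hDpos : ∀ θ, 0 < D θ := fun θ => Real.sqrt_pos.mpr (one_sub_pos hk θ)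
  have hDsq : ∀ θ, D θ ^ 2 = 1 - k ^ 2 * Real.sin θ ^ 2 := fun θ =>
    Real.sq_sqrt (one_sub_pos hk θ).le
  have hcos : ∀ θ ∈ Ico 0 (π / 2), 0 < Real.cos θ := fun θ hθ =>
    Real.cos_pos_of_mem_Ioo ⟨by linarith [hθ.1], hθ.2⟩
  set N : ℝ → ℝ := fun θ => 1 - k ^ 2 * Real.sin θ ^ 2 * (1 + Real.cos θ ^ 2) with hN
  have hNpos : ∀ θ, 0 < N θ := fun θ => by
    have e : N θ = 1 - k ^ 2 + k ^ 2 * Real.cos θ ^ 4 := by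
      simp only [hN]
      linear_combination (-k ^ 2 * (1 + Real.cos θ ^ 2)) * Real.sin_sq_add_cos_sq θ
    rw [e]
    have : 0 ≤ k ^ 2 * Real.cos θ ^ 4 := by positivity
    linarith
  have hd : ∀ θ ∈ Ico 0 (π / 2), HasDerivAt (fun θ => Real.tan θ * D θ)
      (N θ / (Real.cos θ ^ 2 * D θ)) θ := fun θ hθ => by
    have hc := (hcos θ hθ).ne'
    have hDθ := (hDpos θ).ne'
    have a1 := Real.hasDerivAt_tan hc
    have a2 : HasDerivAt D (-(k ^ 2 * (2 * Real.sin θ * Real.cos θ)) / (2 * D θ)) θ := by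
      refine HasDerivAt.sqrt ?_ (one_sub_pos hk θ).ne'
      refine ((((Real.hasDerivAt_sin θ).fun_pow 2).const_mul (k ^ 2)).const_sub 1).congr_deriv ?_
      push_cast; ring
    refine (a1.mul a2).congr_deriv ?_
    rw [Real.tan_eq_sin_div_cos]
    field_simp
    rw [hDsq]
    simp only [hN]
    ring
  have htop : Tendsto (fun θ => Real.tan θ * D θ) (𝓝[<] (π / 2)) atTop := by
    refine Real.tendsto_tan_pi_div_two.atTop_mul_pos (C := D (π / 2)) (hDpos _) ?_
    have : Continuous D := by simp only [hD]; fun_prop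
    exact this.continuousAt.tendsto.mono_left nhdsWithin_le_nhds
  rw [ellipticK_eq_Ioo hk, quarticInt, integral_Ioi_of_increasing hpi hd
    (fun θ hθ => div_pos (hNpos θ) (mul_pos (pow_pos (hcos θ (Ioo_subset_Ico_self hθ)) 2)
      (hDpos θ))) (by simp) htop]
  refine setIntegral_congr_fun measurableSet_Ioo fun θ hθ => ?_
  have hc := hcos θ (Ioo_subset_Ico_self hθ)
  have e : (Real.tan θ * D θ) ^ 4 + 2 * (1 - 2 * k ^ 2) * (Real.tan θ * D θ) ^ 2 + 1 =
      (N θ / Real.cos θ ^ 2) ^ 2 := by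
    rw [show (Real.tan θ * D θ) ^ 4 = Real.tan θ ^ 4 * (D θ ^ 2) ^ 2 by ring, mul_pow, hDsq,
      Real.tan_eq_sin_div_cos]
    field_simp
    simp only [hN]
    have hs : Real.cos θ ^ 2 = 1 - Real.sin θ ^ 2 := by
      linarith [Real.sin_sq_add_cos_sq θ]
    rw [show Real.cos θ ^ 4 = (Real.cos θ ^ 2) ^ 2 by ring, hs]
    ring
  rw [e, Real.sqrt_sq (by have := hNpos θ; positivity)]
  have h1 := (hNpos θ).ne'
  have h2 := (hDpos θ).ne'
  change _ = 1 / D θ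
  field_simp

end elliptic

/-! ### Blow-up at the end of the interval and identification of the constants -/

section identify
open Topology Filter Set

lemma mom_zero_integrable (X : ℝ) {Y : ℝ} (hY : 0 < Y) : IntegrableOn (wt X Y) (Ioi 0) := by
  simpa using integrableOn_exp_mul_wt X hY hY

lemma norm_lap_le (X : ℝ) {Y : ℝ} (hY : 0 < Y) {z : ℂ} (hz : z.re ≤ 0) :
    ‖lap X Y 0 z‖ ≤ mom X Y 0 := by
  have hi := mom_zero_integrable X hY
  have e : mom X Y 0 = ∫ y in Ioi 0, wt X Y y := by simp [mom]
  rw [lap, e]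
  refine norm_integral_le_of_norm_le hi ((ae_restrict_mem measurableSet_Ioi).mono fun y hy => ?_)
  have hy : 0 < y := hy
  have hw := wt_pos X hY y
  rw [norm_mul, norm_pow_mul_exp 0 z hy, Complex.norm_real, Real.norm_of_nonneg hw.le, pow_zero,
    one_mul]
  exact mul_le_of_le_one_right hw.le (Real.exp_le_one_iff.mpr (mul_nonpos_of_nonpos_of_nonneg hz hy.le))

lemma le_lap_re (Y : ℝ) {X x : ℝ} (hX : 0 < X) (hx : x < X) :
    1 / (2 * (X - x)) ≤ (lap Y X 0 x).re := by
  have e : lap Y X 0 x = ((∫ y in Ioi 0, wt Y X y * Real.exp (x * y) : ℝ) : ℂ) := by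
    rw [lap, ← integral_complex_ofReal]
    simp
  rw [e, Complex.ofReal_re]
  have hneg : x - X < 0 := by linarith
  have hI : ∫ y in Ioi (0 : ℝ), (1 / 2) * Real.exp ((x - X) * y) = 1 / (2 * (X - x)) := by
    rw [integral_const_mul, integral_exp_mul_Ioi hneg 0]
    have h1 : X - x ≠ 0 := by linarith
    have h2 : x - X ≠ 0 := hneg.ne
    simp
    field_simp
    ring
  rw [← hI]
  refine setIntegral_mono_on ?_ (integrableOn_exp_mul_wt Y hX hx) measurableSet_Ioi fun y hy => ?_
  · have := (integrableOn_exp_mul_Ioi hneg 0).const_mul (1 / 2)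
    exact this
  · have hy : 0 < y := hy
    have hpos := wt_den_pos Y hX y
    have hle : Real.cos (Y * y) + Real.cosh (X * y) ≤ 2 * Real.exp (X * y) := by
      have h1 := Real.cos_le_one (Y * y)
      have h2 : 1 ≤ Real.exp (X * y) := Real.one_le_exp (by positivity)
      have h3 : Real.exp (-(X * y)) ≤ 1 := Real.exp_le_one_iff.mpr (by
        have : 0 < X * y := by positivity
        linarith)
      rw [Real.cosh_eq]
      linarith
    rw [show (x - X) * y = x * y - X * y by ring, Real.exp_sub, wt]
    have := one_div_le_one_div_of_le hpos hle
    calc 1 / 2 * (Real.exp (x * y) / Real.exp (X * y)) =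
        1 / (2 * Real.exp (X * y)) * Real.exp (x * y) := by field_simp
      _ ≤ _ := by gcongr

end identify

section identify2
open Topology Filter Set
variable {X Y : ℝ}

/-- On the real axis only the term `∫₀^∞ exp (x y) / (cos (Y y) + cosh (X y)) dy` is unbounded
as `x → X`. -/
lemma Gr_tendsto_atTop (hX : 0 < X) (hY : 0 < Y) : Tendsto (Gr X Y 0) (𝓝[<] X) atTop := by
  have h1 : Tendsto (fun x => 1 / 4 * (X - x)⁻¹ + -(mom X Y 0 + 1 / 2 * mom Y X 0)) (𝓝[<] X)
      atTop := by
    refine tendsto_atTop_add_const_right _ _ (Tendsto.const_mul_atTop (by norm_num) ?_)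
    refine tendsto_inv_nhdsGT_zero.comp (tendsto_nhdsWithin_iff.mpr ⟨?_, ?_⟩)
    · have : Tendsto (fun x : ℝ => X - x) (𝓝 X) (𝓝 (X - X)) := by
        exact (continuous_const.sub continuous_id).tendsto X
      rw [sub_self] at this
      exact this.mono_left nhdsWithin_le_nhds
    · filter_upwards [self_mem_nhdsWithin] with x hx
      exact sub_pos.mpr (mem_Iio.mp hx)
  refine tendsto_atTop_mono' _ ?_ h1
  filter_upwards [Ico_mem_nhdsLT hX] with x hx
  have b1 := norm_lap_le X hY (z := Complex.I * x) (by simp)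
  have b2 := norm_lap_le X hY (z := -Complex.I * x) (by simp)
  have b3 := norm_lap_le Y hX (z := -x) (by simpa using hx.1)
  have b4 := le_lap_re Y hX hx.2
  have e : Gr X Y 0 x = 1 / 2 * (lap X Y 0 (Complex.I * x)).im -
      1 / 2 * (lap X Y 0 (-Complex.I * x)).im + 1 / 2 * ((lap Y X 0 x).re - (lap Y X 0 (-x)).re) := by
    simp [Gr, Gd]
    ring
  have c1 := (abs_le.mp ((Complex.abs_im_le_norm _).trans b1)).1
  have c2 := (abs_le.mp ((Complex.abs_im_le_norm _).trans b2)).2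
  have c3 := (abs_le.mp ((Complex.abs_re_le_norm _).trans b3)).2
  have e2 : 1 / (2 * (X - x)) = 1 / 2 * (X - x)⁻¹ := by
    rw [one_div, mul_inv]; norm_num
  rw [e2] at b4
  rw [e]
  linarith

lemma quarticInt_odeA (hX : 0 < X) (hY : 0 < Y) :
    quarticInt (odeA X Y / momSum X Y 0) 1 = √(momSum X Y 0) * X ∧
      ∀ y : ℝ, 0 < y → 0 < y ^ 4 + 2 * (odeA X Y / momSum X Y 0) * y ^ 2 + 1 := by
  have hm := momSum_zero_pos hX hY
  have habs : ∀ x ∈ Ico 0 X, |x| < X := fun x hx => by rw [abs_of_nonneg hx.1]; exact hx.2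
  have h := quarticInt_of_blowup (A := odeA X Y) hX hm (g := Gr X Y 0) (g' := Gr X Y 1)
    (fun x hx => Gr_hasDerivAt hX hY 0 (habs x hx))
    (fun x hx => (Gr_hasDerivAt hX hY 1 (habs x hx)).continuousAt.continuousWithinAt)
    (fun x hx => Gr_first_integral hX hY (habs x hx)) (Gr_zero_even X Y 0)
    (by simpa using Gr_zero_odd X Y 0) (Gr_tendsto_atTop hX hY)
  refine ⟨by rw [quarticInt_scale hm, h.1], fun y hy => ?_⟩
  have h1 := h.2 (√(momSum X Y 0) * y) (by positivity)
  have h2 : √(momSum X Y 0) ^ 2 = momSum X Y 0 := Real.sq_sqrt hm.le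
  have e : (√(momSum X Y 0) * y) ^ 4 + 2 * odeA X Y * (√(momSum X Y 0) * y) ^ 2 +
      momSum X Y 0 ^ 2 =
      momSum X Y 0 ^ 2 * (y ^ 4 + 2 * (odeA X Y / momSum X Y 0) * y ^ 2 + 1) := by
    rw [show (√(momSum X Y 0) * y) ^ 4 = (√(momSum X Y 0) ^ 2) ^ 2 * y ^ 4 by ring, mul_pow, h2]
    field_simp
  rw [e] at h1
  exact pos_of_mul_pos_right h1 (by positivity)

lemma odeA_swap (X Y : ℝ) : odeA Y X = -odeA X Y := by
  simp only [odeA, momSum_swap X Y]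
  simp [neg_div]

lemma quartic_pos {a y : ℝ} (ha : -1 < a) (hy : 0 < y) : 0 < y ^ 4 + 2 * a * y ^ 2 + 1 := by
  have : 0 < y ^ 2 := by positivity
  nlinarith [sq_nonneg (y ^ 2 - 1)]

/-- The pair of complete elliptic integrals `(K, K')` determines the scale `m = G'(0)` and the
parameter `A`: both quartic integrals are strictly monotone in opposite directions. -/
lemma constants {k : ℝ} (hk : k ∈ Ioo (0 : ℝ) 1) :
    momSum (ellipticK k) (ellipticK √(1 - k ^ 2)) 0 = 1 ∧
      odeA (ellipticK k) (ellipticK √(1 - k ^ 2)) = 1 - 2 * k ^ 2 := by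
  have hk2 : 0 < k ^ 2 ∧ k ^ 2 < 1 := ⟨by have := hk.1; positivity, by nlinarith [hk.1, hk.2]⟩
  have hs : √(1 - k ^ 2) ^ 2 = 1 - k ^ 2 := Real.sq_sqrt (by linarith)
  have hk' : √(1 - k ^ 2) ∈ Ioo (0 : ℝ) 1 :=
    ⟨Real.sqrt_pos.mpr (by linarith), by rw [Real.sqrt_lt' one_pos]; linarith⟩
  have q1 := quarticInt_ellipticK hk
  have q2 := quarticInt_ellipticK hk'
  rw [hs, show 1 - 2 * (1 - k ^ 2) = -(1 - 2 * k ^ 2) by ring] at q2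
  have hX := ellipticK_pos hk
  have hY := ellipticK_pos hk'
  set X := ellipticK k
  set Y := ellipticK √(1 - k ^ 2)
  set a := 1 - 2 * k ^ 2 with ha
  obtain ⟨r1, p1⟩ := quarticInt_odeA hX hY
  obtain ⟨r2, p2⟩ := quarticInt_odeA hY hX
  rw [odeA_swap, momSum_swap, pow_zero, one_mul, neg_div] at r2 p2
  have hm := momSum_zero_pos hX hY
  set m := momSum X Y 0
  set B := odeA X Y / m with hB
  have hsm := Real.sqrt_pos.mpr hm
  have n1 : quarticInt B 1 ≠ 0 := by rw [r1]; positivity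
  have n2 : quarticInt (-B) 1 ≠ 0 := by rw [r2]; positivity
  have n3 : quarticInt a 1 ≠ 0 := by rw [q1]; positivity
  have n4 : quarticInt (-a) 1 ≠ 0 := by rw [q2]; positivity
  have hBa : B = a := by
    rcases lt_trichotomy B a with h | h | h
    · exfalso
      have s1 := quarticInt_strictAnti h p1 n1 n3
      have s2 := quarticInt_strictAnti (neg_lt_neg h) (fun y hy => quartic_pos (by linarith) hy)
        n4 n2
      rw [r1, q1] at s1
      rw [r2, q2] at s2
      have t1 : 1 < √m := by by_contra hcon; nlinarith [not_lt.mp hcon]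
      have t2 : √m < 1 := by by_contra hcon; nlinarith [not_lt.mp hcon]
      linarith
    · exact h
    · exfalso
      have s1 := quarticInt_strictAnti h (fun y hy => quartic_pos (by linarith) hy) n3 n1
      have s2 := quarticInt_strictAnti (neg_lt_neg h) p2 n2 n4
      rw [r1, q1] at s1
      rw [r2, q2] at s2
      have t1 : √m < 1 := by by_contra hcon; nlinarith [not_lt.mp hcon]
      have t2 : 1 < √m := by by_contra hcon; nlinarith [not_lt.mp hcon]
      linarith
  rw [hBa, q1] at r1
  have hm1 : √m = 1 := by
    have : (√m - 1) * X = 0 := by linarith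
    rcases mul_eq_zero.mp this with h | h
    · linarith
    · exact absurd h hX.ne'
  have hm' : m = 1 := by rwa [Real.sqrt_eq_one] at hm1
  refine ⟨hm', ?_⟩
  rw [hB, hm', div_one] at hBa
  exact hBa

end identify2

/-! ### The integrals `I_n^+` as moments -/

section moments
open Set

lemma integral_sq_subst (X Y : ℝ) (n : ℕ) :
    ∫ x in Ioi (0 : ℝ), x ^ n / (Real.cos (X * √x) + Real.cosh (Y * √x)) =
      2 * mom X Y (2 * n + 1) := by
  rw [← integral_comp_rpow_Ioi_of_pos (p := 2)
    (g := fun x => x ^ n / (Real.cos (X * √x) + Real.cosh (Y * √x))) two_pos, mom,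
    ← integral_const_mul]
  refine setIntegral_congr_fun measurableSet_Ioi fun y hy => ?_
  have hy : 0 < y := hy
  have e : y ^ (2 : ℝ) = y ^ 2 := Real.rpow_two y
  have e1 : y ^ ((2 : ℝ) - 1) = y := by norm_num
  rw [e, e1, Real.sqrt_sq hy.le, smul_eq_mul, wt]
  ring

lemma Iplus_eq_momSum (k : ℝ) (n : ℕ) :
    Iplus k n = momSum (ellipticK k) (ellipticK √(1 - k ^ 2)) n := by
  have h := integral_sq_subst (ellipticK √(1 - k ^ 2)) (ellipticK k) n
  simp only [add_comm (Real.cos _)] at h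
  rw [Iplus, integral_sq_subst, h, momSum]
  ring

end moments

/-! ### The two recurrences -/

/-- The coefficients of the convolution are antisymmetric under `i ↦ n + 2 - i`, so the full
convolution vanishes; its first two terms produce `I_{n+2}` and `I_{n+1}`. -/
lemma first_recurrence (I : ℕ → ℝ) (a : ℝ) (h0 : I 0 = 1) (h1 : I 1 = -2 * a) (n : ℕ) :
    I (n + 2) = 2 * n * (2 * n + 3) * a * I (n + 1) + ∑ j ∈ Finset.range (n + 1),
      (2 * (Nat.choose (2 * n + 3) (2 * j + 3) : ℝ) -
        (Nat.choose (2 * n + 4) (2 * j + 4) : ℝ)) * I (j + 2) * I (n - j) := by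
  set e : ℕ → ℝ := fun i => (Nat.choose (2 * n + 3) (2 * i) : ℝ) with he
  have hsum : ∑ i ∈ Finset.range (n + 3), (e (n + 2 - i) - e i) * (I i * I (n + 2 - i)) = 0 := by
    have hflip := Finset.sum_range_reflect (fun i => e i * (I i * I (n + 2 - i))) (n + 3)
    simp only [sub_mul, Finset.sum_sub_distrib]
    rw [sub_eq_zero, ← hflip]
    refine Finset.sum_congr rfl fun i hi => ?_
    have hi : i < n + 3 := Finset.mem_range.mp hi
    rw [show n + 3 - 1 - i = n + 2 - i by omega, show n + 2 - (n + 2 - i) = i by omega]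
    ring
  rw [Finset.sum_range_succ', Finset.sum_range_succ'] at hsum
  have c0 : e (n + 2 - 0) - e 0 = -1 := by
    simp only [he]
    rw [Nat.choose_eq_zero_of_lt (by omega)]
    simp
  have c1 : e (n + 2 - (0 + 1)) - e (0 + 1) = -(n * (2 * n + 3)) := by
    simp only [he]
    rw [show 2 * (n + 2 - (0 + 1)) = 2 * n + 2 by omega, show 2 * (0 + 1) = 2 by rfl,
      Nat.choose_succ_self_right, Nat.cast_choose_two]
    push_cast
    ring
  have c2 : ∀ j ∈ Finset.range (n + 1),
      (e (n + 2 - (j + 1 + 1)) - e (j + 1 + 1)) * (I (j + 1 + 1) * I (n + 2 - (j + 1 + 1))) =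
      (2 * (Nat.choose (2 * n + 3) (2 * j + 3) : ℝ) -
        (Nat.choose (2 * n + 4) (2 * j + 4) : ℝ)) * I (j + 2) * I (n - j) := fun j hj => by
    have hj : j < n + 1 := Finset.mem_range.mp hj
    rw [show n + 2 - (j + 1 + 1) = n - j by omega]
    have s1 : Nat.choose (2 * n + 3) (2 * (n - j)) = Nat.choose (2 * n + 3) (2 * j + 3) := by
      rw [← Nat.choose_symm (by omega : 2 * j + 3 ≤ 2 * n + 3)]
      congr 1; omega
    have s2 : Nat.choose (2 * n + 4) (2 * j + 4) =
        Nat.choose (2 * n + 3) (2 * j + 3) + Nat.choose (2 * n + 3) (2 * j + 4) :=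
      Nat.choose_succ_succ' _ _
    simp only [he]
    rw [s1, s2, show 2 * (j + 1 + 1) = 2 * j + 4 by ring]
    push_cast
    ring
  rw [Finset.sum_congr rfl c2, c0, c1, h0, zero_add, h1, show n + 2 - 1 = n + 1 by omega,
    Nat.sub_zero] at hsum
  linear_combination -hsum

lemma sum_range_two_mul (f : ℕ → ℝ) (hf : ∀ j, f (2 * j + 1) = 0) (N : ℕ) :
    ∑ i ∈ Finset.range (2 * N), f i = ∑ j ∈ Finset.range N, f (2 * j) := by
  induction N with
  | zero => simp
  | succ N ih =>
    rw [show 2 * (N + 1) = 2 * N + 1 + 1 by ring, Finset.sum_range_succ, Finset.sum_range_succ, ih,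
      Finset.sum_range_succ, hf]
    ring

section second
open Topology Filter

lemma eventually_abs_lt {X : ℝ} (hX : 0 < X) : ∀ᶠ x in 𝓝 (0 : ℝ), |x| < X :=
  (continuous_abs.tendsto' 0 0 abs_zero).eventually_lt_const hX

variable {X Y : ℝ} (hX : 0 < X) (hY : 0 < Y)
include hX hY

lemma Gr_contDiffAt (r n : ℕ) : ContDiffAt ℝ n (Gr X Y r) 0 := by
  have h1 : ContDiffAt ℂ n (Gd X Y r) ((0 : ℝ) : ℂ) := by
    have h0 : ((0 : ℝ) : ℂ) ∈ rect X Y := ofReal_mem_rect hY (by simpa using hX)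
    exact ((Gd_differentiableOn hX hY r).contDiffOn (isOpen_rect X Y)).contDiffAt
      ((isOpen_rect X Y).mem_nhds h0)
  exact h1.real_of_complex

lemma iteratedDeriv_Gr (r n : ℕ) : iteratedDeriv n (Gr X Y r) =ᶠ[𝓝 0] Gr X Y (r + n) := by
  induction n with
  | zero => simp
  | succ n ih =>
    rw [iteratedDeriv_succ]
    refine ih.deriv.trans ?_
    filter_upwards [eventually_abs_lt hX] with x hx
    exact (Gr_hasDerivAt hX hY (r + n) hx).deriv

lemma Gr_third {x : ℝ} (hx : |x| < X) :
    Gr X Y 3 x = 6 * (Gr X Y 1 x * Gr X Y 0 x ^ 2) + 2 * odeA X Y * Gr X Y 1 x := by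
  have d0 := Gr_hasDerivAt hX hY 0 hx
  have h1 := (((d0.fun_pow 3).const_mul 2).fun_add (d0.const_mul (2 * odeA X Y)))
  have h2 := h1.congr_of_eventuallyEq (f₁ := Gr X Y 2) (by
    filter_upwards [(continuous_abs.tendsto x).eventually_lt_const hx] with y hy
    exact Gr_ode hX hY hy)
  rw [(Gr_hasDerivAt hX hY 2 hx).unique h2]
  push_cast
  ring

/-- The derivatives of `G²` at `0`, from `(G²)' = 2 G' G`. -/
lemma iteratedDeriv_Gr_sq (M : ℕ) :
    iteratedDeriv (2 * M + 2) (fun x => Gr X Y 0 x ^ 2) 0 =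
      2 * ((-1) ^ M * ∑ l ∈ Finset.range (M + 1),
        (Nat.choose (2 * M + 1) (2 * l) : ℝ) * momSum X Y l * momSum X Y (M - l)) := by
  have hd : deriv (fun x => Gr X Y 0 x ^ 2) =ᶠ[𝓝 0] fun x => 2 * (Gr X Y 1 x * Gr X Y 0 x) := by
    filter_upwards [eventually_abs_lt hX] with x hx
    rw [((Gr_hasDerivAt hX hY 0 hx).fun_pow 2).deriv]
    push_cast
    ring
  rw [iteratedDeriv_succ', hd.iteratedDeriv_eq, iteratedDeriv_const_mul_field,
    iteratedDeriv_fun_mul (Gr_contDiffAt hX hY 1 _) (Gr_contDiffAt hX hY 0 _),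
    show 2 * M + 1 + 1 = 2 * (M + 1) by ring, sum_range_two_mul]
  · congr 1
    rw [Finset.mul_sum]
    refine Finset.sum_congr rfl fun l hl => ?_
    have hl : l < M + 1 := Finset.mem_range.mp hl
    rw [(iteratedDeriv_Gr hX hY 1 _).eq_of_nhds, (iteratedDeriv_Gr hX hY 0 _).eq_of_nhds,
      add_comm 1, Gr_zero_odd, show 0 + (2 * M + 1 - 2 * l) = 2 * (M - l) + 1 by omega, Gr_zero_odd]
    have hs : (-1 : ℝ) ^ M = (-1) ^ l * (-1) ^ (M - l) := by
      rw [← pow_add]; congr 1; omega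
    rw [hs]
    ring
  · intro j
    rw [(iteratedDeriv_Gr hX hY 1 _).eq_of_nhds, show 1 + (2 * j + 1) = 2 * (j + 1) by ring,
      Gr_zero_even]
    ring

lemma second_recurrence (n : ℕ) :
    momSum X Y (n + 2) = -2 * odeA X Y * momSum X Y (n + 1) + 12 * ∑ j ∈ Finset.range (n + 1),
      (Nat.choose (2 * n + 2) (2 * j) : ℝ) * momSum X Y j *
        ∑ l ∈ Finset.range (n - j + 1),
          (Nat.choose (2 * n - 2 * j + 1) (2 * l) : ℝ) * momSum X Y l * momSum X Y (n - j - l) := by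
  have h3 : Gr X Y 3 =ᶠ[𝓝 0] fun x =>
      6 * (Gr X Y 1 x * Gr X Y 0 x ^ 2) + 2 * odeA X Y * Gr X Y 1 x := by
    filter_upwards [eventually_abs_lt hX] with x hx using Gr_third hX hY hx
  have c1 := Gr_contDiffAt hX hY 1 (2 * n + 2)
  have c0 := (Gr_contDiffAt hX hY 0 (2 * n + 2)).pow 2
  have h := h3.iteratedDeriv_eq (2 * n + 2)
  rw [iteratedDeriv_fun_add (contDiffAt_const.mul (c1.mul c0)) (contDiffAt_const.mul c1),
    iteratedDeriv_const_mul_field, iteratedDeriv_const_mul_field, iteratedDeriv_fun_mul c1 c0,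
    (iteratedDeriv_Gr hX hY 1 _).eq_of_nhds, (iteratedDeriv_Gr hX hY 3 _).eq_of_nhds,
    show 3 + (2 * n + 2) = 2 * (n + 2) + 1 by ring, show 1 + (2 * n + 2) = 2 * (n + 1) + 1 by ring,
    Gr_zero_odd, Gr_zero_odd, Finset.sum_range_succ, Nat.sub_self, iteratedDeriv_zero,
    show Gr X Y 0 0 = 0 from Gr_zero_even X Y 0, show 2 * n + 2 = 2 * (n + 1) by ring,
    sum_range_two_mul] at h
  · have hterm : ∀ j ∈ Finset.range (n + 1),
        (Nat.choose (2 * (n + 1)) (2 * j) : ℝ) * iteratedDeriv (2 * j) (Gr X Y 1) 0 *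
          iteratedDeriv (2 * (n + 1) - 2 * j) (fun x => Gr X Y 0 x ^ 2) 0 =
        (-1) ^ n * 2 * ((Nat.choose (2 * n + 2) (2 * j) : ℝ) * momSum X Y j *
        ∑ l ∈ Finset.range (n - j + 1),
          (Nat.choose (2 * n - 2 * j + 1) (2 * l) : ℝ) * momSum X Y l * momSum X Y (n - j - l)) := by
      intro j hj
      have hj : j < n + 1 := Finset.mem_range.mp hj
      rw [(iteratedDeriv_Gr hX hY 1 _).eq_of_nhds, add_comm 1, Gr_zero_odd,
        show 2 * (n + 1) - 2 * j = 2 * (n - j) + 2 by omega, iteratedDeriv_Gr_sq hX hY,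
        show 2 * n - 2 * j = 2 * (n - j) by omega, show 2 * (n + 1) = 2 * n + 2 by ring]
      have hs : (-1 : ℝ) ^ n = (-1) ^ j * (-1) ^ (n - j) := by
        rw [← pow_add]; congr 1; omega
      rw [hs]
      ring
    rw [Finset.sum_congr rfl hterm, ← Finset.mul_sum] at h
    have hs : (-1 : ℝ) ^ n * (-1) ^ n = 1 := by rw [← mul_pow]; simp
    set S := ∑ j ∈ Finset.range (n + 1), (Nat.choose (2 * n + 2) (2 * j) : ℝ) * momSum X Y j *
        ∑ l ∈ Finset.range (n - j + 1),
          (Nat.choose (2 * n - 2 * j + 1) (2 * l) : ℝ) * momSum X Y l * momSum X Y (n - j - l)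
    rw [pow_add, pow_succ] at h
    linear_combination (-1) ^ n * h - (momSum X Y (n + 2) + 2 * odeA X Y * momSum X Y (n + 1) -
      12 * S) * hs
  · intro j
    rw [(iteratedDeriv_Gr hX hY 1 _).eq_of_nhds, show 1 + (2 * j + 1) = 2 * (j + 1) by ring,
      Gr_zero_even]
    ring

end second

theorem Iplus_recurrences (k : ℝ) (hk : k ∈ Set.Ioo (0 : ℝ) 1) (n : ℕ) :
    (Iplus k (n + 2) =
      2 * n * (2 * n + 3) * (1 - 2 * k ^ 2) * Iplus k (n + 1) +
        ∑ j ∈ Finset.range (n + 1),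
          (2 * (Nat.choose (2 * n + 3) (2 * j + 3) : ℝ) -
            (Nat.choose (2 * n + 4) (2 * j + 4) : ℝ)) * Iplus k (j + 2) * Iplus k (n - j)) ∧
    (Iplus k (n + 2) =
      -2 * (1 - 2 * k ^ 2) * Iplus k (n + 1) +
        12 * ∑ j ∈ Finset.range (n + 1),
          (Nat.choose (2 * n + 2) (2 * j) : ℝ) * Iplus k j *
            ∑ l ∈ Finset.range (n - j + 1),
              (Nat.choose (2 * n - 2 * j + 1) (2 * l) : ℝ) * Iplus k l * Iplus k (n - j - l)) := by
  have hk' : √(1 - k ^ 2) ∈ Set.Ioo (0 : ℝ) 1 := by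
    have h1 : 0 < k ^ 2 ∧ k ^ 2 < 1 := ⟨by have := hk.1; positivity, by nlinarith [hk.1, hk.2]⟩
    exact ⟨Real.sqrt_pos.mpr (by linarith), by rw [Real.sqrt_lt' one_pos]; linarith⟩
  obtain ⟨hm, hA⟩ := constants hk
  simp only [Iplus_eq_momSum]
  refine ⟨first_recurrence _ _ hm ?_ n, ?_⟩
  · rw [← hA, odeA, hm]
    ring
  · rw [← hA]
    exact second_recurrence (ellipticK_pos hk) (ellipticK_pos hk') n
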